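/- Let q ≥ 2·10^49 be a natural number and let χ be a primitive quadratic (real-valued, non-principal, χ² principal) Dirichlet character modulo q with χ(−1) = 1. Then L(1, χ) ≤ (9/20) log q. -/

import Mathlib

open scoped ComplexOrder

/-!
Write `c n = Re χ(n)`, `X = log N`, and choose the cut-off `N ≈ 24 √q`.

Since `χ` is even and primitive, twice the smoothed sum `∑_{n < k} χ(n) (k - n)` is the double sum
`∑_{i, j < k} χ(i - j)`. By the Gauss sum it equals a sum of `χ` against a Fejér kernel, whose
positivity gives the bound `k √q / 2` without a logarithm (`abs_fejer_sum_le`). Two partial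
summations then truncate the series for `L(1, χ)` (`LFunction_one_bound`):
`L(1, χ) ≤ ∑_{n ≤ N} c n (1 / n - 1 / N) + 3 √q / (2 N)`.

The trivial bound for the remaining sum is about `log N`, which would give `1/2 log q`. The factor
`9/10` comes from the multiplicativity of `c`. With the weights `1 / n - 1 / N` smoothed into Fejér
means of divisor sums, the sum only grows when `c p` is replaced by `1` at all primes outside
a chosen set `P`, and the second Bonferroni inequality bounds the result by the trivial bound minus
a saving from each `p ∈ P` with `c p ≠ 1`, plus pair terms (`IsSignChar.sum_le_bonferroni`). There
are enough such primes: the smoothed sum of `c` up to `N` is at most `N √q / 2 ≤ N ^ 2 / 48`, far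
below the value `N ^ 2 / 2` for `c = 1`, and this forces `∑_{p ≤ N} (1 - c p) / p ≥ 0.958`
(`IsSignChar.le_sum_div`). Mertens' theorem prevents this mass from concentrating on primes
so close to `N` that the saving disappears (`IsSignChar.sum_saving_ge`). Altogether the sum
is at most `0.9 log N - 2.93` (`IsSignChar.sum_le`), and the constant absorbs `0.9 log 24` and the
tail `1.5 / 24` (`log_cutoff`).
-/

/-! ### The smoothed character sum -/

lemma char_zero_eq_zero {q : ℕ} {χ : DirichletCharacter ℂ q} (hnp : χ ≠ 1) : χ 0 = 0 := by
  refine χ.map_nonunit fun h => hnp ?_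
  rw [isUnit_zero_iff] at h
  ext a
  have : (a : ZMod q) = 1 := by
    calc (a : ZMod q) = a * 1 := by ring
      _ = a * 0 := by rw [h]
      _ = 0 := by ring
      _ = 1 := h
  rw [this]; simp

open Finset in
lemma gaussSum_sq_of_even_quadratic {q : ℕ} [NeZero q] {χ : DirichletCharacter ℂ q}
    (hprim : χ.IsPrimitive) (hquad : χ ^ 2 = 1) (hpar : χ (-1) = 1) :
    gaussSum χ ZMod.stdAddChar ^ 2 = q := by
  classical
  set τ := gaussSum χ (ZMod.stdAddChar (N := q)) with hτ
  have hinv : χ⁻¹ = χ := by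
    rw [inv_eq_iff_mul_eq_one, ← sq, hquad]
  have h1 : ∀ a : ZMod q, ∑ x, χ x * ZMod.stdAddChar (a * x) = χ a * τ := fun a => by
    have := gaussSum_mulShift_of_isPrimitive (e := ZMod.stdAddChar) hprim a
    rw [hinv] at this
    rw [← this]; simp [gaussSum]
  have h2 : ∑ a : ZMod q, (χ a * τ) * ZMod.stdAddChar (-a) = τ ^ 2 := by
    have h3 := h1 (-1)
    simp only [neg_mul, one_mul] at h3
    rw [hpar, one_mul] at h3
    calc _ = τ * ∑ a : ZMod q, χ a * ZMod.stdAddChar (-a) := by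
          rw [mul_sum]; exact sum_congr rfl fun _ _ => by ring
      _ = _ := by rw [h3]; ring
  rw [← h2]
  calc ∑ a : ZMod q, (χ a * τ) * ZMod.stdAddChar (-a)
      = ∑ a : ZMod q, ∑ x, χ x * ZMod.stdAddChar (a * (x - 1)) := by
        refine sum_congr rfl fun a _ => ?_
        rw [← h1, sum_mul]
        refine sum_congr rfl fun x _ => ?_
        rw [mul_assoc, ← AddChar.map_add_eq_mul]; ring_nf
    _ = ∑ x, χ x * ∑ a : ZMod q, ZMod.stdAddChar (a * (x - 1)) := by
        rw [sum_comm]; exact sum_congr rfl fun _ _ => by rw [mul_sum]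
    _ = q := by
        simp_rw [AddChar.sum_mulShift _ (ZMod.isPrimitive_stdAddChar q), sub_eq_zero]
        simp [ZMod.card]

/-- The geometric sum `∑_{j < k} e(j x / q)`. -/
noncomputable def expSum (q : ℕ) [NeZero q] (k : ℕ) (x : ZMod q) : ℂ :=
  ∑ j ∈ Finset.range k, ZMod.stdAddChar ((j : ZMod q) * x)

/-- At a nonzero frequency a full period contributes nothing. -/
lemma expSum_mod {q : ℕ} [NeZero q] (k : ℕ) {x : ZMod q} (hx : x ≠ 0) :
    expSum q k x = expSum q (k % q) x := by
  have hq0 : expSum q q x = 0 := by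
    classical
    have := AddChar.sum_mulShift x (ZMod.isPrimitive_stdAddChar q)
    rw [if_neg hx, Nat.cast_zero] at this
    rw [expSum, ← this]
    refine Finset.sum_bij (fun (j : ℕ) _ => (j : ZMod q)) (by simp) ?_ ?_ (by simp)
    · intro a ha b hb hab
      rw [Finset.mem_range] at ha hb
      rw [ZMod.natCast_eq_natCast_iff'] at hab
      rwa [Nat.mod_eq_of_lt ha, Nat.mod_eq_of_lt hb] at hab
    · intro b _
      exact ⟨b.val, by simpa using ZMod.val_lt b, by simp⟩
  have hstep : ∀ k, expSum q (q + k) x = expSum q k x := fun k => by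
    have h := hq0
    rw [expSum] at h ⊢
    rw [Finset.sum_range_add, h, zero_add]
    simp [expSum]
  have : ∀ m r, expSum q (r + q * m) x = expSum q r x := by
    intro m r
    induction m with
    | zero => simp
    | succ m ih => rw [Nat.mul_succ, show r + (q * m + q) = q + (r + q * m) by ring, hstep, ih]
  conv_lhs => rw [← Nat.mod_add_div k q]
  exact this _ _

/-- Parseval, after reducing `k` modulo `q` so that the residues `j < k` are distinct. -/
lemma sum_normSq_expSum_le {q : ℕ} [NeZero q] (k : ℕ) :
    ∑ x ∈ (Finset.univ : Finset (ZMod q)).erase 0, ‖expSum q k x‖ ^ 2 ≤ q * k := by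
  classical
  have hr : k % q < q := Nat.mod_lt _ (Nat.pos_of_ne_zero (NeZero.ne q))
  set r := k % q with hrdef
  have h1 : ((∑ x : ZMod q, ‖expSum q r x‖ ^ 2 : ℝ) : ℂ) = q * r := by
    push_cast
    calc ∑ x : ZMod q, ((‖expSum q r x‖ : ℂ)) ^ 2
        = ∑ x : ZMod q, ∑ i ∈ Finset.range r, ∑ j ∈ Finset.range r,
            ZMod.stdAddChar (x * ((i : ZMod q) - (j : ZMod q))) := by
          refine Finset.sum_congr rfl fun x _ => ?_
          rw [← Complex.mul_conj', expSum, map_sum, Finset.sum_mul_sum]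
          refine Finset.sum_congr rfl fun i _ => Finset.sum_congr rfl fun j _ => ?_
          rw [← AddChar.map_neg_eq_conj, ← AddChar.map_add_eq_mul]; ring_nf
      _ = ∑ i ∈ Finset.range r, ∑ j ∈ Finset.range r, ∑ x : ZMod q,
            ZMod.stdAddChar (x * ((i : ZMod q) - (j : ZMod q))) := by
          rw [Finset.sum_comm]
          exact Finset.sum_congr rfl fun _ _ => Finset.sum_comm
      _ = ∑ i ∈ Finset.range r, ∑ j ∈ Finset.range r, if i = j then (q : ℂ) else 0 := by
          refine Finset.sum_congr rfl fun i hi => Finset.sum_congr rfl fun j hj => ?_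
          have key : ((i : ZMod q) - (j : ZMod q) = 0) ↔ i = j := by
            rw [sub_eq_zero, ZMod.natCast_eq_natCast_iff',
              Nat.mod_eq_of_lt ((Finset.mem_range.1 hi).trans hr),
              Nat.mod_eq_of_lt ((Finset.mem_range.1 hj).trans hr)]
          rw [AddChar.sum_mulShift _ (ZMod.isPrimitive_stdAddChar q), ZMod.card]
          by_cases hij : i = j
          · rw [if_pos (key.2 hij), if_pos hij]
          · rw [if_neg (fun h => hij (key.1 h)), if_neg hij, Nat.cast_zero]
      _ = q * r := by
          rw [Finset.sum_congr rfl (g := fun _ => (q : ℂ))]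
          · simp [mul_comm]
          · intro i hi
            rw [Finset.sum_ite_eq, if_pos hi]
  have h2 : ∑ x : ZMod q, ‖expSum q r x‖ ^ 2 = q * r := by exact_mod_cast h1
  calc ∑ x ∈ (Finset.univ : Finset (ZMod q)).erase 0, ‖expSum q k x‖ ^ 2
      = ∑ x ∈ (Finset.univ : Finset (ZMod q)).erase 0, ‖expSum q r x‖ ^ 2 := by
        refine Finset.sum_congr rfl fun x hx => ?_
        rw [expSum_mod k (Finset.ne_of_mem_erase hx)]
    _ ≤ ∑ x : ZMod q, ‖expSum q r x‖ ^ 2 :=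
        Finset.sum_le_univ_sum_of_nonneg (fun _ => by positivity)
    _ = q * r := h2
    _ ≤ q * k := by gcongr; exact Nat.mod_le _ _

/-- A Pólya–Vinogradov inequality for the smoothed sum, without the logarithm. As `χ` is even, twice
the sum is `∑_{i, j < k} χ (i - j)`; expanding `χ` in additive characters turns this into
`τ⁻¹ ∑ₓ χ x * ‖expSum q k x‖ ^ 2`, where `τ` is the Gauss sum, and the nonnegative kernel
`‖expSum q k x‖ ^ 2` has total mass at most `q * k` over `x ≠ 0`. -/
lemma abs_fejer_sum_le {q : ℕ} [NeZero q] {χ : DirichletCharacter ℂ q}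
    (hprim : χ.IsPrimitive) (hnp : χ ≠ 1) (hquad : χ ^ 2 = 1) (hpar : χ (-1) = 1) (k : ℕ) :
    ‖∑ n ∈ Finset.range k, χ n * ((k : ℂ) - n)‖ ≤ k * √q / 2 := by
  classical
  set τ := gaussSum χ (ZMod.stdAddChar (N := q)) with hτ
  have hτ2 : τ ^ 2 = q := gaussSum_sq_of_even_quadratic hprim hquad hpar
  have hq : 0 < (q : ℝ) := by exact_mod_cast Nat.pos_of_ne_zero (NeZero.ne q)
  have hτn : ‖τ‖ = √q := by
    have : ‖τ‖ ^ 2 = q := by rw [← norm_pow, hτ2]; simp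
    rw [← this, Real.sqrt_sq (norm_nonneg _)]
  have hinv : χ⁻¹ = χ := by
    rw [inv_eq_iff_mul_eq_one, ← sq, hquad]
  have h1 : ∀ a : ZMod q, ∑ x, χ x * ZMod.stdAddChar (a * x) = χ a * τ := fun a => by
    have := gaussSum_mulShift_of_isPrimitive (e := ZMod.stdAddChar) hprim a
    rw [hinv] at this
    rw [← this]; simp [gaussSum]
  have heven : ∀ a : ZMod q, χ (-a) = χ a := fun a => by
    rw [neg_eq_neg_one_mul, map_mul, hpar, one_mul]
  have hχ0 : χ 0 = 0 := char_zero_eq_zero hnp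
  have h2 : 2 * ∑ n ∈ Finset.range k, χ n * ((k : ℂ) - n)
      = ∑ i ∈ Finset.range k, ∑ j ∈ Finset.range k, χ ((i : ZMod q) - (j : ZMod q)) := by
    have hM : ∀ k : ℕ, ∑ j ∈ Finset.range k, χ ((k : ZMod q) - (j : ZMod q))
        = ∑ n ∈ Finset.range (k + 1), χ (n : ZMod q) := fun k => by
      rw [Finset.sum_range_succ', Nat.cast_zero, hχ0, add_zero, ← Finset.sum_range_reflect]
      refine Finset.sum_congr rfl fun j hj => ?_
      have := Finset.mem_range.1 hj
      congr 1
      rw [show (k - 1 - j : ℕ) = k - (j + 1) by omega, Nat.cast_sub (by omega)]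
      push_cast; ring
    induction k with
    | zero => simp
    | succ k ih =>
      rw [Finset.sum_range_succ (n := k) (f := fun i => ∑ j ∈ Finset.range (k+1), _)]
      simp_rw [Finset.sum_range_succ (n := k)]
      rw [Finset.sum_add_distrib, ← ih]
      have e1 : ∑ i ∈ Finset.range k, χ ((i : ZMod q) - (k : ZMod q)) = ∑ j ∈ Finset.range k, χ ((k : ZMod q) - (j : ZMod q)) :=
        Finset.sum_congr rfl fun j _ => by rw [← heven, neg_sub]
      rw [e1, hM, sub_self, hχ0, add_zero, Finset.sum_range_succ]
      have e2 : ∑ x ∈ Finset.range k, χ (x : ZMod q) * (((k + 1 : ℕ) : ℂ) - x)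
          = ∑ x ∈ Finset.range k, χ (x : ZMod q) * ((k : ℂ) - x) + ∑ x ∈ Finset.range k, χ (x : ZMod q) := by
        rw [← Finset.sum_add_distrib]; exact Finset.sum_congr rfl fun _ _ => by push_cast; ring
      rw [e2]; push_cast; ring
  have hexp : ∀ x : ZMod q, (‖expSum q k x‖ : ℂ) ^ 2 = ∑ i ∈ Finset.range k, ∑ j ∈ Finset.range k,
      ZMod.stdAddChar (((i : ZMod q) - (j : ZMod q)) * x) := fun x => by
    rw [← Complex.mul_conj', expSum, map_sum, Finset.sum_mul_sum]
    refine Finset.sum_congr rfl fun i _ => Finset.sum_congr rfl fun j _ => ?_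
    rw [← AddChar.map_neg_eq_conj, ← AddChar.map_add_eq_mul]; ring_nf
  have h3 : (∑ i ∈ Finset.range k, ∑ j ∈ Finset.range k, χ ((i : ZMod q) - (j : ZMod q))) * τ
      = ∑ x : ZMod q, χ x * (‖expSum q k x‖ : ℂ) ^ 2 := by
    simp_rw [Finset.sum_mul, ← h1, hexp, Finset.mul_sum]
    rw [Finset.sum_comm (s := (Finset.univ : Finset (ZMod q)))]
    exact Finset.sum_congr rfl fun i _ => Finset.sum_comm
  have h4 : ‖∑ x : ZMod q, χ x * (‖expSum q k x‖ : ℂ) ^ 2‖ ≤ q * k := by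
    rw [← Finset.add_sum_erase _ _ (Finset.mem_univ (0 : ZMod q)), hχ0, zero_mul, zero_add]
    refine (norm_sum_le _ _).trans ((Finset.sum_le_sum fun x _ => ?_).trans (sum_normSq_expSum_le k))
    rw [norm_mul, norm_pow, Complex.norm_real, norm_norm]
    exact mul_le_of_le_one_left (by positivity) (χ.norm_le_one x)
  rw [← h3, ← h2, norm_mul, hτn, norm_mul] at h4
  have hs : 0 < √(q : ℝ) := Real.sqrt_pos.2 hq
  have hss : √(q : ℝ) * √q = q := Real.mul_self_sqrt hq.le
  have h5 : 2 * ‖∑ n ∈ Finset.range k, χ n * ((k : ℂ) - n)‖ ≤ √q * k := by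
    refine le_of_mul_le_mul_right ?_ hs
    calc _ ≤ (q : ℝ) * k := by simpa using h4
      _ = √q * k * √q := by rw [mul_right_comm, hss]
  linarith

/-! ### Truncating the series for `L(1, χ)` -/

/-- Two partial summations: the iterated partial sums of `c` are `O(k)`, and for a convex decreasing
`φ` the second differences are nonnegative, so their sum weighted by `k` telescopes. -/
lemma abel_twice_bound {c φ : ℕ → ℝ} {B : ℝ} (K : ℕ)
    (hT : ∀ k : ℕ, |∑ n ∈ Finset.range k, c n * ((k : ℝ) - n)| ≤ k * B)
    (hconv : ∀ k, 2 * φ (k + 1) ≤ φ k + φ (k + 2)) (hanti : Antitone φ) :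
    |∑ n ∈ Finset.range (K + 1), c n * φ n - (∑ n ∈ Finset.range (K + 1), c n) * φ (K + 1)|
      ≤ (φ 0 - φ (K + 1)) * B := by
  set T : ℕ → ℝ := fun k => ∑ n ∈ Finset.range k, c n * ((k : ℝ) - n) with hTdef
  have hTsucc : ∀ k, T (k + 1) = T k + ∑ n ∈ Finset.range (k + 1), c n := fun k => by
    simp only [hTdef]
    rw [Finset.sum_range_succ (fun n => c n * (((k + 1 : ℕ) : ℝ) - n)), Finset.sum_range_succ c,
      ← add_assoc, ← Finset.sum_add_distrib]
    congr 1
    · exact Finset.sum_congr rfl fun _ _ => by push_cast; ring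
    · push_cast; ring
  have hT' : ∀ k, |T k| ≤ k * B := hT
  have key : ∀ K, |∑ n ∈ Finset.range (K + 1), c n * φ n
        - (∑ n ∈ Finset.range (K + 1), c n) * φ (K + 1) - T (K + 1) * (φ K - φ (K + 1))|
      ≤ (φ 0 - φ (K + 1) - (K + 1) * (φ K - φ (K + 1))) * B := by
    intro K
    induction K with
    | zero =>
      have : T 1 = c 0 := by simp [hTdef]
      simp [this]
      ring
    | succ K ih =>
      have e : ∑ n ∈ Finset.range (K + 1 + 1), c n * φ n
          - (∑ n ∈ Finset.range (K + 1 + 1), c n) * φ (K + 1 + 1)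
          - T (K + 1 + 1) * (φ (K + 1) - φ (K + 1 + 1)) =
          (∑ n ∈ Finset.range (K + 1), c n * φ n
            - (∑ n ∈ Finset.range (K + 1), c n) * φ (K + 1) - T (K + 1) * (φ K - φ (K + 1)))
          + T (K + 1) * (φ K + φ (K + 2) - 2 * φ (K + 1)) := by
        rw [hTsucc (K + 1), Finset.sum_range_succ _ (K + 1), Finset.sum_range_succ _ (K + 1)]
        ring
      rw [e]
      refine (abs_add_le _ _).trans ?_
      have h0 : 0 ≤ φ K + φ (K + 2) - 2 * φ (K + 1) := by linarith [hconv K]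
      have h1 : |T (K + 1) * (φ K + φ (K + 2) - 2 * φ (K + 1))|
          ≤ ((K + 1 : ℕ) : ℝ) * B * (φ K + φ (K + 2) - 2 * φ (K + 1)) := by
        rw [abs_mul, abs_of_nonneg h0]
        exact mul_le_mul_of_nonneg_right (hT' _) h0
      refine (add_le_add ih h1).trans (le_of_eq ?_)
      push_cast
      ring
  have h1 := key K
  have h2 : |T (K + 1) * (φ K - φ (K + 1))| ≤ ((K + 1 : ℕ) : ℝ) * B * (φ K - φ (K + 1)) := by
    have h0 : 0 ≤ φ K - φ (K + 1) := sub_nonneg.2 (hanti (Nat.le_succ K))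
    rw [abs_mul, abs_of_nonneg h0]
    exact mul_le_mul_of_nonneg_right (hT' _) h0
  have h3 := abs_add_le (∑ n ∈ Finset.range (K + 1), c n * φ n
        - (∑ n ∈ Finset.range (K + 1), c n) * φ (K + 1) - T (K + 1) * (φ K - φ (K + 1)))
        (T (K + 1) * (φ K - φ (K + 1)))
  rw [sub_add_cancel] at h3
  refine h3.trans ((add_le_add h1 h2).trans (le_of_eq ?_))
  push_cast
  ring

/-- `n ↦ n ^ (-s)` for `n ≥ N`, continued to the left of `N` by the line through its values at `N`
and `N + 1`. This keeps the function convex and decreasing, so that the double partial summation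
applies to it with small initial value. -/
noncomputable def linCont (s : ℝ) (N n : ℕ) : ℝ :=
  if N ≤ n then (n : ℝ) ^ (-s)
  else (N : ℝ) ^ (-s) + ((N : ℝ) - n) * ((N : ℝ) ^ (-s) - ((N + 1 : ℕ) : ℝ) ^ (-s))

/-- Convexity of `x ^ (-s)`, from `(x + 1) ^ 2 ≥ x * (x + 2)` and the AM-GM inequality. -/
lemma rpow_neg_convex {s : ℝ} (hs : 0 < s) {x : ℝ} (hx : 0 < x) :
    2 * (x + 1) ^ (-s) ≤ x ^ (-s) + (x + 2) ^ (-s) := by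
  have hsq : ∀ y : ℝ, 0 < y → y ^ (-s) = (y ^ (-s / 2)) ^ 2 := fun y hy => by
    rw [← Real.rpow_natCast, ← Real.rpow_mul hy.le]; congr 1; push_cast; ring
  have h1 : (x + 1) ^ (-s) ≤ x ^ (-s / 2) * (x + 2) ^ (-s / 2) := by
    rw [← Real.mul_rpow hx.le (by linarith), hsq _ (by linarith), sq,
      ← Real.mul_rpow (by linarith) (by linarith)]
    exact Real.rpow_le_rpow_of_nonpos (by positivity) (by nlinarith) (by linarith)
  rw [hsq x hx, hsq (x + 2) (by linarith)]
  linarith [sq_nonneg (x ^ (-s / 2) - (x + 2) ^ (-s / 2))]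

lemma linCont_convex {s : ℝ} (hs : 0 < s) {N : ℕ} (hN : 0 < N) (k : ℕ) :
    2 * linCont s N (k + 1) ≤ linCont s N k + linCont s N (k + 2) := by
  unfold linCont
  rcases lt_or_ge k N with h | h
  · rcases Nat.lt_or_ge (k + 1) N with h1 | h1
    · rcases Nat.lt_or_ge (k + 2) N with h2 | h2
      · rw [if_neg (by omega), if_neg (by omega), if_neg (by omega)]
        push_cast; apply le_of_eq; ring
      · have : N = k + 2 := by omega
        subst this
        rw [if_neg (by omega), if_neg (by omega), if_pos (by omega)]
        push_cast; apply le_of_eq; ring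
    · have : N = k + 1 := by omega
      subst this
      rw [if_pos (by omega), if_neg (by omega), if_pos (by omega)]
      push_cast
      rw [show (k : ℝ) + 1 + 1 = k + 2 by ring]
      apply le_of_eq; ring
  · rw [if_pos (by omega), if_pos (by omega), if_pos (by omega)]
    have : 0 < (k : ℝ) := by exact_mod_cast (by omega : 0 < k)
    exact_mod_cast rpow_neg_convex hs this

lemma linCont_antitone {s : ℝ} (hs : 0 < s) {N : ℕ} (hN : 0 < N) : Antitone (linCont s N) := by
  refine antitone_nat_of_succ_le fun k => ?_
  have hd : ∀ n : ℕ, 0 < n → ((n + 1 : ℕ) : ℝ) ^ (-s) ≤ (n : ℝ) ^ (-s) := fun n hn =>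
    Real.rpow_le_rpow_of_nonpos (by exact_mod_cast hn) (by push_cast; linarith) (by linarith)
  unfold linCont
  rcases lt_or_ge k N with h | h
  · rcases Nat.lt_or_ge (k + 1) N with h1 | h1
    · rw [if_neg (by omega), if_neg (by omega)]
      have := hd N hN
      push_cast at *
      nlinarith
    · have : N = k + 1 := by omega
      subst this
      rw [if_pos (by omega), if_neg (by omega)]
      have := hd (k + 1) hN
      push_cast at *
      nlinarith
  · rw [if_pos (by omega), if_pos (by omega)]
    exact hd k (by omega)

open Filter Topology in
/-- The Dirichlet series minus its linear continuation is a finite sum, and the continued series is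
controlled by `abel_twice_bound`. -/
lemma tsum_rpow_le {c : ℕ → ℝ} {B : ℝ} (hc : ∀ n, |c n| ≤ 1)
    (hT : ∀ k : ℕ, |∑ n ∈ Finset.range k, c n * ((k : ℝ) - n)| ≤ k * B)
    {s : ℝ} (hs : 1 < s) {N : ℕ} (hN : 0 < N) :
    ∑' n, c n * (n : ℝ) ^ (-s) ≤
      ∑ n ∈ Finset.range N, c n * ((n : ℝ) ^ (-s) - linCont s N n) + linCont s N 0 * B := by
  have hsum : Summable fun n : ℕ => c n * (n : ℝ) ^ (-s) := by
    refine Summable.of_norm_bounded (g := fun n : ℕ => (n : ℝ) ^ (-s))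
      (Real.summable_nat_rpow.2 (by linarith)) fun n => ?_
    rw [norm_mul, Real.norm_eq_abs, Real.norm_of_nonneg (by positivity)]
    exact mul_le_of_le_one_left (by positivity) (hc n)
  have hB : 0 ≤ B := by
    have := (abs_nonneg _).trans (hT 1); simpa using this
  have hlim := (tendsto_add_atTop_iff_nat (f := fun K => ∑ n ∈ Finset.range K, c n * (n : ℝ) ^ (-s)) 1).2
    hsum.hasSum.tendsto_sum_nat
  have hz : Tendsto (fun K : ℕ => ((K + 1 : ℕ) : ℝ) ^ (1 - s)) atTop (𝓝 0) := by
    have h := (tendsto_rpow_neg_atTop (y := s - 1) (by linarith)).comp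
      (tendsto_natCast_atTop_atTop.comp (tendsto_add_atTop_nat 1))
    refine h.congr fun K => ?_
    simp
  have hz' : Tendsto (fun K : ℕ => ∑ n ∈ Finset.range N, c n * ((n : ℝ) ^ (-s) - linCont s N n)
      + linCont s N 0 * B + ((K + 1 : ℕ) : ℝ) ^ (1 - s)) atTop
      (𝓝 (∑ n ∈ Finset.range N, c n * ((n : ℝ) ^ (-s) - linCont s N n) + linCont s N 0 * B)) := by
    simpa using hz.const_add (∑ n ∈ Finset.range N, c n * ((n : ℝ) ^ (-s) - linCont s N n)
      + linCont s N 0 * B)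
  refine le_of_tendsto_of_tendsto hlim hz' ?_
  filter_upwards [eventually_ge_atTop N] with K hK
  have h1 := (abs_le.1 (abel_twice_bound K hT
    (linCont_convex (s := s) (by linarith) hN) (linCont_antitone (s := s) (by linarith) hN))).2
  have h2 : ∑ n ∈ Finset.range (K + 1), c n * (n : ℝ) ^ (-s)
      = ∑ n ∈ Finset.range N, c n * ((n : ℝ) ^ (-s) - linCont s N n)
        + ∑ n ∈ Finset.range (K + 1), c n * linCont s N n := by
    have : ∑ n ∈ Finset.range N, c n * ((n : ℝ) ^ (-s) - linCont s N n)
        = ∑ n ∈ Finset.range (K + 1), c n * ((n : ℝ) ^ (-s) - linCont s N n) := by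
      refine Finset.sum_subset (Finset.range_mono (by omega)) fun n _ hn => ?_
      rw [linCont, if_pos (by simpa using hn), sub_self, mul_zero]
    rw [this, ← Finset.sum_add_distrib]
    exact Finset.sum_congr rfl fun _ _ => by ring
  have h3 : linCont s N (K + 1) = ((K + 1 : ℕ) : ℝ) ^ (-s) := by
    rw [linCont, if_pos (by omega)]
  have h4 : ∑ n ∈ Finset.range (K + 1), c n ≤ ((K + 1 : ℕ) : ℝ) := by
    calc _ ≤ ∑ n ∈ Finset.range (K + 1), (1 : ℝ) :=
          Finset.sum_le_sum fun n _ => (abs_le.1 (hc n)).2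
      _ = _ := by simp
  have h5 : (∑ n ∈ Finset.range (K + 1), c n) * linCont s N (K + 1) ≤ ((K + 1 : ℕ) : ℝ) ^ (1 - s) := by
    rw [h3, sub_eq_add_neg, Real.rpow_add (by positivity), Real.rpow_one]
    exact mul_le_mul_of_nonneg_right h4 (by positivity)
  have h6 : 0 ≤ linCont s N (K + 1) * B := by rw [h3]; positivity
  rw [h2]
  linarith [sub_mul (linCont s N 0) (linCont s N (K + 1)) B]

open Filter Topology in
/-- `tsum_rpow_le` in the limit `s → 1⁺`. The continued series costs at most `√q / N`,
and dropping the sloped part `(N - n) / (N (N + 1))` of the continuation, which leaves the weight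
`1 / n - 1 / N`, costs at most another `√q / (2 N)`. -/
lemma LFunction_one_bound {q : ℕ} [NeZero q] {χ : DirichletCharacter ℂ q}
    (hprim : χ.IsPrimitive) (hnp : χ ≠ 1) (hquad : χ ^ 2 = 1)
    (hreal : ∀ n : ZMod q, (χ n).im = 0) (hpar : χ (-1) = 1) {N : ℕ} (hN : 0 < N) :
    (χ.LFunction 1).im = 0 ∧ (χ.LFunction 1).re ≤
      ∑ n ∈ Finset.range N, (χ n).re * (1 / (n : ℝ) - 1 / N) + 3 / 2 * √q / N := by
  set c : ℕ → ℝ := fun n => (χ n).re with hcdef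
  have hχc : ∀ n : ℕ, χ n = (c n : ℂ) := fun n =>
    Complex.ext (by simp [hcdef]) (by simp [hreal])
  have hc : ∀ n, |c n| ≤ 1 := fun n => (Complex.abs_re_le_norm _).trans (χ.norm_le_one _)
  have hT : ∀ k : ℕ, |∑ n ∈ Finset.range k, c n * ((k : ℝ) - n)| ≤ k * (√q / 2) := fun k => by
    have := abs_fejer_sum_le hprim hnp hquad hpar k
    simp_rw [hχc] at this
    have e : (∑ n ∈ Finset.range k, (c n : ℂ) * ((k : ℂ) - n))
        = ((∑ n ∈ Finset.range k, c n * ((k : ℝ) - n) : ℝ) : ℂ) := by push_cast; rfl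
    rw [e, Complex.norm_real, Real.norm_eq_abs] at this
    linarith
  have hLs : ∀ s : ℝ, 1 < s → χ.LFunction s = ((∑' n, c n * (n : ℝ) ^ (-s) : ℝ) : ℂ) := by
    intro s hs
    rw [DirichletCharacter.LFunction_eq_LSeries χ (by simpa using hs), LSeries, Complex.ofReal_tsum]
    congr 1
    ext n
    rcases Nat.eq_zero_or_pos n with rfl | hn
    · simp [Real.zero_rpow (by linarith : -s ≠ 0)]
    · rw [LSeries.term_of_ne_zero hn.ne', hχc, Complex.ofReal_mul,
        Complex.ofReal_cpow (by positivity), Complex.ofReal_neg, Complex.cpow_neg]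
      simp [div_eq_mul_inv]
  have hcont : Continuous χ.LFunction := (DirichletCharacter.differentiable_LFunction hnp).continuous
  have hcs : Continuous fun s : ℝ => χ.LFunction s := hcont.comp Complex.continuous_ofReal
  have hlim : Tendsto (fun s : ℝ => χ.LFunction s) (𝓝[>] 1) (𝓝 (χ.LFunction 1)) := by
    have := (hcs.tendsto 1).mono_left (nhdsWithin_le_nhds (s := Set.Ioi 1))
    simpa using this
  have hlim_re := (Complex.continuous_re.tendsto _).comp hlim
  have hlim_im := (Complex.continuous_im.tendsto _).comp hlim
  constructor
  · refine tendsto_nhds_unique hlim_im (tendsto_const_nhds.congr' ?_)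
    filter_upwards [self_mem_nhdsWithin] with s hs
    simp only [Function.comp_apply]
    rw [hLs s hs, Complex.ofReal_im]
  · have hN' : (0 : ℝ) < N := by exact_mod_cast hN
    have hpow : ∀ m : ℕ, 0 < m → ContinuousAt (fun s : ℝ => (m : ℝ) ^ (-s)) 1 := fun m hm =>
      (Real.continuousAt_const_rpow (by positivity)).comp continuousAt_neg
    have hlin : ∀ n, ContinuousAt (fun s => linCont s N n) 1 := fun n => by
      unfold linCont
      split_ifs with h
      · exact hpow n (by omega)
      · exact (hpow N hN).add (continuousAt_const.mul ((hpow N hN).sub (hpow (N + 1) (by omega))))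
    have hc0 : c 0 = 0 := by simp [hcdef, char_zero_eq_zero hnp]
    have hR : ContinuousAt (fun s : ℝ => ∑ n ∈ Finset.range N, c n * ((n : ℝ) ^ (-s) - linCont s N n)
        + linCont s N 0 * (√q / 2)) 1 := by
      refine ContinuousAt.add ?_ ((hlin 0).mul continuousAt_const)
      refine tendsto_finsetSum _ fun n _ => ?_
      rcases Nat.eq_zero_or_pos n with rfl | hn
      · simp only [hc0, zero_mul]; exact tendsto_const_nhds
      · exact (continuousAt_const.mul ((hpow n hn).sub (hlin n)))
    have hle : (χ.LFunction 1).re ≤ ∑ n ∈ Finset.range N, c n * ((n : ℝ) ^ (-(1 : ℝ)) - linCont 1 N n)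
        + linCont 1 N 0 * (√q / 2) := by
      refine le_of_tendsto_of_tendsto hlim_re
        (hR.tendsto.mono_left (nhdsWithin_le_nhds (s := Set.Ioi 1))) ?_
      filter_upwards [self_mem_nhdsWithin] with s hs
      simp only [Function.comp_apply]
      rw [hLs s hs, Complex.ofReal_re]
      exact tsum_rpow_le hc hT hs hN
    refine hle.trans ?_
    have hd : (N : ℝ) ^ (-(1 : ℝ)) - ((N + 1 : ℕ) : ℝ) ^ (-(1 : ℝ)) = 1 / (N * (N + 1)) := by
      rw [Real.rpow_neg_one, Real.rpow_neg_one]; push_cast; field_simp; ring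
    -- The chord of `1 / x` over `[N, N + 1]` has slope `-1 / (N (N + 1))`.
    have h0 : linCont 1 N 0 = 1 / N + 1 / (N + 1) := by
      rw [linCont, if_neg (by omega), hd, Real.rpow_neg_one]; push_cast; field_simp; ring
    have h1 : ∑ n ∈ Finset.range N, c n * ((n : ℝ) ^ (-(1 : ℝ)) - linCont 1 N n)
        = ∑ n ∈ Finset.range N, c n * (1 / (n : ℝ) - 1 / N)
          - (∑ n ∈ Finset.range N, c n * ((N : ℝ) - n)) * (1 / (N * (N + 1))) := by
      rw [Finset.sum_mul, ← Finset.sum_sub_distrib]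
      refine Finset.sum_congr rfl fun n hn => ?_
      rw [linCont, if_neg (by simpa using hn), hd, Real.rpow_neg_one, Real.rpow_neg_one]
      ring
    have h2 := (abs_le.1 (hT N)).1
    have h3 : -(∑ n ∈ Finset.range N, c n * ((N : ℝ) - n)) * (1 / (N * (N + 1)))
        ≤ (N * (√q / 2)) * (1 / (N * (N + 1))) :=
      mul_le_mul_of_nonneg_right (by linarith) (by positivity)
    have h4 : (N * (√q / 2)) * (1 / ((N : ℝ) * (N + 1))) = √q / 2 * (1 / (N + 1)) := by
      field_simp
    have h5 : (1 : ℝ) / (N + 1) ≤ 1 / N := one_div_le_one_div_of_le hN' (by linarith)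
    have h6 := mul_le_mul_of_nonneg_left h5 (by positivity : (0 : ℝ) ≤ √q)
    rw [h1, h0]
    have h7 : 3 / 2 * √q / N = 3 / 2 * (√q * (1 / N)) := by ring
    rw [h7]
    linarith

/-! ### The Fejér weights -/

lemma sum_multiples (F : ℕ → ℝ) {m : ℕ} (hm : 0 < m) (N : ℕ) :
    ∑ n ∈ (Finset.Icc 1 N).filter (m ∣ ·), F n = ∑ k ∈ Finset.Icc 1 (N / m), F (k * m) := by
  symm
  refine Finset.sum_bij (fun k _ => k * m) ?_ ?_ ?_ (fun _ _ => rfl)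
  · intro k hk
    rw [Finset.mem_Icc] at hk
    rw [Finset.mem_filter, Finset.mem_Icc]
    exact ⟨⟨Nat.mul_pos hk.1 hm, (Nat.le_div_iff_mul_le hm).1 hk.2⟩, dvd_mul_left _ _⟩
  · intro a _ b _ h
    exact Nat.eq_of_mul_eq_mul_right hm h
  · intro b hb
    rw [Finset.mem_filter, Finset.mem_Icc] at hb
    obtain ⟨⟨h1, h2⟩, k, rfl⟩ := hb
    refine ⟨k, ?_, mul_comm _ _⟩
    rw [Finset.mem_Icc]
    exact ⟨Nat.pos_of_ne_zero (by rintro rfl; simp at h1), (Nat.le_div_iff_mul_le hm).2 (by rwa [mul_comm])⟩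

lemma sum_Icc_id (K : ℕ) : ∑ k ∈ Finset.Icc 1 K, (k : ℝ) = K * (K + 1) / 2 := by
  induction K with
  | zero => simp
  | succ K ih => rw [Finset.sum_Icc_succ_top (by omega), ih]; push_cast; ring

lemma sum_multiples_fejer (N : ℕ) {m : ℕ} (hm : 0 < m) :
    ∑ n ∈ (Finset.Icc 1 N).filter (m ∣ ·), (1 - (n : ℝ) / N) =
      ((N / m : ℕ) : ℝ) - m * ((N / m : ℕ) : ℝ) * (((N / m : ℕ) : ℝ) + 1) / (2 * N) := by
  rw [sum_multiples (fun n => 1 - (n : ℝ) / N) hm, Finset.sum_sub_distrib, ← Finset.sum_div]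
  push_cast
  rw [← Finset.sum_mul, sum_Icc_id]
  simp
  ring

/-- The weight `(2 / N) ∑_{d ∣ n ≤ N} (1 - n / N)`, which is `1 / d - 1 / N` up to `O(d / N ^ 2)`. With
these weights `∑_d f d * wt N d` is `2 / N` times the Fejér mean of the divisor sums
`∑_{d ∣ n} f d`, so it is monotone in those divisor sums. -/
noncomputable def wt (N d : ℕ) : ℝ :=
  2 / N * ∑ n ∈ (Finset.Icc 1 N).filter (d ∣ ·), (1 - (n : ℝ) / N)

lemma fejer_nonneg {N n : ℕ} (h : n ≤ N) : 0 ≤ 1 - (n : ℝ) / N := by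
  have : (n : ℝ) / N ≤ 1 := div_le_one_of_le₀ (by exact_mod_cast h) (by positivity)
  linarith

lemma wt_nonneg (N d : ℕ) : 0 ≤ wt N d := by
  refine mul_nonneg (by positivity) (Finset.sum_nonneg fun n hn => ?_)
  exact fejer_nonneg (Finset.mem_Icc.1 (Finset.mem_filter.1 hn).1).2

/-- The exact value is `1 / d - 1 / N + r (d - r) / (d N ^ 2)` with `r = N % d`. -/
lemma wt_bounds {N d : ℕ} (hd : 1 ≤ d) (hdN : d ≤ N) :
    1 / (d : ℝ) - 1 / N ≤ wt N d ∧ wt N d ≤ 1 / (d : ℝ) - 1 / N + d / (4 * N ^ 2) := by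
  have hd' : (0 : ℝ) < d := by exact_mod_cast hd
  have hN' : (0 : ℝ) < N := by exact_mod_cast (by omega : 0 < N)
  rw [wt, sum_multiples_fejer N hd]
  set K := N / d with hK
  set r := N % d with hr
  have e : (N : ℝ) = d * K + r := by exact_mod_cast (Nat.div_add_mod N d).symm
  have hr0 : (0 : ℝ) ≤ r := by positivity
  have hrd : (r : ℝ) ≤ d := by exact_mod_cast (Nat.mod_lt N hd).le
  have key : 2 / (N : ℝ) * (K - d * K * (K + 1) / (2 * N)) =
      1 / (d : ℝ) - 1 / N + r * (d - r) / (d * N ^ 2) := by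
    field_simp
    rw [e]; ring
  rw [key]
  constructor
  · have : 0 ≤ (r : ℝ) * (d - r) / (d * N ^ 2) :=
      div_nonneg (mul_nonneg hr0 (by linarith)) (by positivity)
    linarith
  · have : (r : ℝ) * (d - r) / (d * N ^ 2) ≤ d / (4 * N ^ 2) := by
      rw [div_le_div_iff₀ (by positivity) (by positivity)]
      nlinarith [mul_nonneg (sq_nonneg ((d : ℝ) - 2 * r)) (sq_nonneg (N : ℝ))]
    linarith

/-- The total weight `∑_{m ∣ d ≤ N} wt N d` of the multiples of `m`. -/
noncomputable def wtMul (N m : ℕ) : ℝ := ∑ d ∈ (Finset.Icc 1 N).filter (m ∣ ·), wt N d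

lemma wtMul_nonneg (N m : ℕ) : 0 ≤ wtMul N m := Finset.sum_nonneg fun _ _ => wt_nonneg _ _

lemma wtMul_eq_zero {N m : ℕ} (h : N < m) : wtMul N m = 0 := by
  refine Finset.sum_eq_zero fun d hd => ?_
  rw [Finset.mem_filter, Finset.mem_Icc] at hd
  exact absurd (Nat.le_of_dvd hd.1.1 hd.2) (by omega)

lemma harmonic_cast (K : ℕ) : ∑ k ∈ Finset.Icc 1 K, 1 / (k : ℝ) = (harmonic K : ℝ) := by
  rw [harmonic_eq_sum_Icc]; push_cast; simp

lemma wtMul_le {N m : ℕ} (hm : 0 < m) (hmN : m ≤ N) :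
    wtMul N m ≤ 1 / m * (Real.log (N / m) + 1 / 4) := by
  have hm' : (0 : ℝ) < m := by exact_mod_cast hm
  have hN' : (0 : ℝ) < N := by exact_mod_cast (by omega : 0 < N)
  rw [wtMul, sum_multiples _ hm]
  set K := N / m with hK
  have hK1 : 1 ≤ K := (Nat.one_le_div_iff hm).2 hmN
  have hK1' : (1 : ℝ) ≤ K := by exact_mod_cast hK1
  have hKm : (K : ℝ) * m ≤ N := by exact_mod_cast Nat.div_mul_le_self N m
  have h1 : ∑ k ∈ Finset.Icc 1 K, wt N (k * m) ≤
      ∑ k ∈ Finset.Icc 1 K, (1 / m * (1 / (k : ℝ)) - 1 / N + k * (m / (4 * N ^ 2))) := by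
    refine Finset.sum_le_sum fun k hk => ?_
    rw [Finset.mem_Icc] at hk
    have := (wt_bounds (N := N) (d := k * m) (Nat.mul_pos hk.1 hm)
      ((Nat.le_div_iff_mul_le hm).1 hk.2)).2
    refine this.trans (le_of_eq ?_)
    have : (k : ℝ) ≠ 0 := by exact_mod_cast (by omega : k ≠ 0)
    push_cast; field_simp
  refine h1.trans ?_
  rw [Finset.sum_add_distrib, Finset.sum_sub_distrib, ← Finset.mul_sum, ← Finset.sum_mul,
    harmonic_cast, sum_Icc_id]
  have h2 := harmonic_le_one_add_log K
  have h3 : Real.log (K / (N / m)) ≤ K / (N / m) - 1 := Real.log_le_sub_one_of_pos (by positivity)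
  rw [Real.log_div (by positivity) (by positivity)] at h3
  have h4 : (K : ℝ) * (K + 1) / 2 * (m / (4 * N ^ 2)) ≤ 1 / m * (1 / 4) := by
    rw [div_mul_div_comm, div_mul_div_comm, div_le_div_iff₀ (by positivity) (by positivity)]
    nlinarith [mul_le_mul hKm hKm (by positivity) hN'.le]
  have h5 : ∑ i ∈ Finset.Icc 1 K, 1 / (N : ℝ) = 1 / m * (K / (N / m)) := by
    simp; field_simp
  rw [h5]
  have : 1 / (m : ℝ) * (harmonic K : ℝ) ≤ 1 / m * (Real.log (N / m) + K / (N / m)) :=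
    mul_le_mul_of_nonneg_left (by linarith) (by positivity)
  linarith

lemma le_wtMul {N m : ℕ} (hm : 0 < m) (hmN : m ≤ N) :
    1 / m * (Real.log (N / m) - 1 / 2) ≤ wtMul N m := by
  have hm' : (0 : ℝ) < m := by exact_mod_cast hm
  have hN' : (0 : ℝ) < N := by exact_mod_cast (by omega : 0 < N)
  rw [wtMul, sum_multiples _ hm]
  set K := N / m with hK
  have hK1 : 1 ≤ K := (Nat.one_le_div_iff hm).2 hmN
  have hK1' : (1 : ℝ) ≤ K := by exact_mod_cast hK1
  have hKm : (K : ℝ) * m ≤ N := by exact_mod_cast Nat.div_mul_le_self N m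
  have hKm2 : (N : ℝ) ≤ (K + 1) * m := by
    have := (Nat.lt_div_mul_add hm (a := N)).le
    have h : N ≤ (K + 1) * m := by rw [add_mul, one_mul]; exact this
    exact_mod_cast h
  have h1 : ∑ k ∈ Finset.Icc 1 K, (1 / m * (1 / (k : ℝ)) - 1 / N) ≤
      ∑ k ∈ Finset.Icc 1 K, wt N (k * m) := by
    refine Finset.sum_le_sum fun k hk => ?_
    rw [Finset.mem_Icc] at hk
    have := (wt_bounds (N := N) (d := k * m) (Nat.mul_pos hk.1 hm)
      ((Nat.le_div_iff_mul_le hm).1 hk.2)).1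
    refine le_trans (le_of_eq ?_) this
    have : (k : ℝ) ≠ 0 := by exact_mod_cast (by omega : k ≠ 0)
    push_cast; field_simp
  refine le_trans ?_ h1
  rw [Finset.sum_sub_distrib, ← Finset.mul_sum, harmonic_cast]
  have h5 : ∑ i ∈ Finset.Icc 1 K, 1 / (N : ℝ) = 1 / m * (K / (N / m)) := by
    simp; field_simp
  rw [h5, ← mul_sub]
  refine mul_le_mul_of_nonneg_left ?_ (by positivity)
  set y : ℝ := N / m with hy
  have hy0 : 0 < y := by positivity
  have hyK : (K : ℝ) ≤ y := (le_div_iff₀ hm').2 hKm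
  have hyK2 : y ≤ K + 1 := (div_le_iff₀ hm').2 hKm2
  have h6 := Real.eulerMascheroniConstant_lt_eulerMascheroniSeq' (K + 1)
  have h7 := Real.one_half_lt_eulerMascheroniConstant
  rw [Real.eulerMascheroniSeq', if_neg (by omega), harmonic_succ] at h6
  push_cast at h6
  have h8 : 1 - y / (K + 1) ≤ Real.log ((K + 1) / y) := by
    have := Real.one_sub_inv_le_log_of_pos (show 0 < ((K : ℝ) + 1) / y by positivity)
    rwa [inv_div] at this
  rw [Real.log_div (by positivity) (by positivity)] at h8
  have h9 : (K : ℝ) / y * (1 - y / (K + 1)) ≤ 1 - y / (K + 1) := by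
    refine mul_le_of_le_one_left ?_ ((div_le_one hy0).2 hyK)
    have := (div_le_one (show (0 : ℝ) < K + 1 by positivity)).2 hyK2
    linarith
  have h10 : (K : ℝ) / y * (1 - y / (K + 1)) = K / y - 1 + ((K : ℝ) + 1)⁻¹ := by
    field_simp; ring
  linarith

/-- The main term: `∑_{d ≤ N} (1 / d - 1 / N) ≤ log N + γ - 1` up to the error of `wt_bounds`, with
`γ < 2 / 3`. -/
lemma sum_wt_le {N : ℕ} (hN : 1 ≤ N) :
    ∑ d ∈ Finset.Icc 1 N, wt N d ≤ Real.log (N + 1) + 2 / 3 - 1 + (N + 1) / (8 * N) := by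
  have hN' : (0 : ℝ) < N := by exact_mod_cast hN
  have h1 : ∑ d ∈ Finset.Icc 1 N, wt N d ≤
      ∑ d ∈ Finset.Icc 1 N, (1 / (d : ℝ) - 1 / N + d * (1 / (4 * N ^ 2))) := by
    refine Finset.sum_le_sum fun d hd => ?_
    rw [Finset.mem_Icc] at hd
    refine (wt_bounds hd.1 hd.2).2.trans (le_of_eq (by ring))
  refine h1.trans ?_
  rw [Finset.sum_add_distrib, Finset.sum_sub_distrib, ← Finset.sum_mul, harmonic_cast, sum_Icc_id]
  have h2 := Real.eulerMascheroniSeq_lt_eulerMascheroniConstant N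
  have h3 := Real.eulerMascheroniConstant_lt_two_thirds
  rw [Real.eulerMascheroniSeq] at h2
  have h4 : (N : ℝ) * (N + 1) / 2 * (1 / (4 * N ^ 2)) = (N + 1) / (8 * N) := by
    field_simp; ring
  have h5 : ∑ i ∈ Finset.Icc 1 N, 1 / (N : ℝ) = 1 := by
    simp; field_simp
  rw [h4, h5]
  linarith

/-- Replacing the weights `1 / d - 1 / N` by `wt` costs about `1 / 8`. -/
lemma sum_le_sum_wt {N : ℕ} (hN : 1 ≤ N) {c : ℕ → ℝ} (hc : ∀ n, |c n| ≤ 1) :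
    ∑ d ∈ Finset.Icc 1 N, c d * (1 / (d : ℝ) - 1 / N) ≤
      ∑ d ∈ Finset.Icc 1 N, c d * wt N d + (N + 1) / (8 * N) := by
  have hN' : (0 : ℝ) < N := by exact_mod_cast hN
  have h4 : (N : ℝ) * (N + 1) / 2 * (1 / (4 * N ^ 2)) = (N + 1) / (8 * N) := by
    field_simp; ring
  rw [← h4, ← sum_Icc_id, Finset.sum_mul, ← Finset.sum_add_distrib]
  refine Finset.sum_le_sum fun d hd => ?_
  rw [Finset.mem_Icc] at hd
  obtain ⟨h1, h2⟩ := wt_bounds hd.1 hd.2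
  have h3 : (d : ℝ) / (4 * N ^ 2) = d * (1 / (4 * N ^ 2)) := by ring
  obtain ⟨h5, h6⟩ := abs_le.1 (hc d)
  nlinarith

/-! ### Completely multiplicative functions and their divisor sums -/

lemma sum_divisors_eq_prod {g : ℕ → ℝ} (h1 : g 1 = 1)
    (hmul : ∀ a b, a ≠ 0 → b ≠ 0 → g (a * b) = g a * g b) {n : ℕ} (hn : n ≠ 0) :
    ∑ d ∈ n.divisors, g d = n.factorization.prod fun p k => ∑ i ∈ Finset.range (k + 1), g p ^ i := by
  classical
  let G : ArithmeticFunction ℝ := ⟨fun n => if n = 0 then 0 else g n, by simp⟩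
  have hG : ∀ n, n ≠ 0 → G n = g n := fun n hn => by simp [G, hn]
  have hGm : G.IsMultiplicative := by
    rw [ArithmeticFunction.IsMultiplicative.iff_ne_zero]
    refine ⟨by rw [hG 1 one_ne_zero, h1], fun {m n} hm hn _ => ?_⟩
    rw [hG _ (mul_ne_zero hm hn), hG _ hm, hG _ hn, hmul _ _ hm hn]
  have hpow : ∀ p i, p ≠ 0 → g (p ^ i) = g p ^ i := by
    intro p i hp
    induction i with
    | zero => simp [h1]
    | succ i ih => rw [pow_succ, hmul _ _ (pow_ne_zero _ hp) hp, ih, pow_succ]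
  have hZ := (ArithmeticFunction.isMultiplicative_zeta.natCast (R := ℝ)).mul hGm
  have hsum : ∀ m, m ≠ 0 → ((ArithmeticFunction.zeta : ArithmeticFunction ℝ) * G) m
      = ∑ d ∈ m.divisors, g d := fun m _ => by
    rw [ArithmeticFunction.coe_zeta_mul_apply]
    exact Finset.sum_congr rfl fun d hd => hG d (Nat.pos_of_mem_divisors hd).ne'
  rw [← hsum n hn, hZ.multiplicative_factorization _ hn]
  refine Finsupp.prod_congr fun p hp => ?_
  have hp' : p.Prime := Nat.prime_of_mem_primeFactors (by simpa using hp)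
  rw [hsum _ (pow_ne_zero _ hp'.ne_zero), Nat.sum_divisors_prime_pow hp']
  exact Finset.sum_congr rfl fun i _ => hpow _ _ hp'.ne_zero

/-- A completely multiplicative function with values in `{-1, 0, 1}`. -/
structure IsSignChar (c : ℕ → ℝ) : Prop where
  one : c 1 = 1
  mul : ∀ a b, c (a * b) = c a * c b
  val : ∀ n, c n = -1 ∨ c n = 0 ∨ c n = 1

namespace IsSignChar
variable {c : ℕ → ℝ}

lemma abs_le (hc : IsSignChar c) (n : ℕ) : |c n| ≤ 1 := by
  rcases hc.val n with h | h | h <;> simp [h]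

lemma geom_nonneg (hc : IsSignChar c) (p k : ℕ) : 0 ≤ ∑ i ∈ Finset.range k, c p ^ i := by
  rcases hc.val p with h | h | h
  · rw [h, neg_one_geom_sum]; split_ifs <;> norm_num
  all_goals rw [h]; positivity

lemma geom_le (hc : IsSignChar c) (p k : ℕ) : ∑ i ∈ Finset.range k, c p ^ i ≤ k := by
  calc _ ≤ ∑ i ∈ Finset.range k, (1 : ℝ) := Finset.sum_le_sum fun i _ => by
        refine (le_abs_self _).trans ?_
        rw [abs_pow]
        exact pow_le_one₀ (abs_nonneg _) (hc.abs_le p)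
    _ = k := by simp

/-- The completely multiplicative function (on positive integers) agreeing with `c` at
the primes of `P` and equal to `1` at all other primes. -/
noncomputable def trunc (c : ℕ → ℝ) (P : Finset ℕ) (d : ℕ) : ℝ :=
  ∏ p ∈ P, c p ^ d.factorization p

lemma trunc_prime (P : Finset ℕ) {p : ℕ} (hp : p.Prime) :
    trunc c P p = if p ∈ P then c p else 1 := by
  classical
  rw [trunc, hp.factorization]
  have : ∀ x ∈ P, c x ^ (Finsupp.single p 1) x = if x = p then c x else 1 := fun x _ => by
    rcases eq_or_ne x p with rfl | h
    · simp
    · simp [h]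
  rw [Finset.prod_congr rfl this, Finset.prod_ite_eq' P p]

/-- Replacing `c p` by `1` increases each factor `∑_{i ≤ k} (c p) ^ i`, and all factors are
nonnegative. -/
lemma sum_divisors_le (hc : IsSignChar c) (P : Finset ℕ) {n : ℕ} (hn : n ≠ 0) :
    ∑ d ∈ n.divisors, c d ≤ ∑ d ∈ n.divisors, trunc c P d := by
  rw [sum_divisors_eq_prod hc.one (fun a b _ _ => hc.mul a b) hn,
    sum_divisors_eq_prod (g := trunc c P) (by simp [trunc]) ?_ hn]
  · refine Finset.prod_le_prod (fun p _ => hc.geom_nonneg _ _) fun p hp => ?_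
    have hp' : p.Prime := Nat.prime_of_mem_primeFactors (by simpa using hp)
    beta_reduce
    rw [trunc_prime P hp']
    split_ifs
    · exact le_rfl
    · refine (hc.geom_le _ _).trans (by simp)
  · intro a b ha hb
    simp only [trunc]
    rw [Nat.factorization_mul ha hb, ← Finset.prod_mul_distrib]
    exact Finset.prod_congr rfl fun p _ => by rw [Finsupp.add_apply, pow_add]

lemma pow (hc : IsSignChar c) (a k : ℕ) : c (a ^ k) = c a ^ k := by
  induction k with
  | zero => simp [hc.one]
  | succ k ih => rw [pow_succ, hc.mul, ih, pow_succ]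

lemma eq_trunc (hc : IsSignChar c) {P : Finset ℕ} {n : ℕ} (hn : n ≠ 0)
    (hP : n.primeFactors ⊆ P) : c n = trunc c P n := by
  have h1 : c n = n.factorization.prod fun p k => c p ^ k := by
    conv_lhs => rw [← Nat.prod_factorization_pow_eq_self hn]
    rw [Finsupp.prod, Finsupp.prod]
    let φ : ℕ →* ℝ := ⟨⟨c, hc.one⟩, hc.mul⟩
    change φ _ = _
    rw [map_prod]
    exact Finset.prod_congr rfl fun p _ => hc.pow _ _
  rw [h1, Finsupp.prod, trunc]
  refine Finset.prod_subset (by simpa using hP) fun p _ hp => ?_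
  rw [Finsupp.notMem_support_iff.1 hp, pow_zero]

lemma sum_mul_wt (f : ℕ → ℝ) (N : ℕ) : ∑ d ∈ Finset.Icc 1 N, f d * wt N d =
    2 / N * ∑ n ∈ Finset.Icc 1 N, (∑ d ∈ n.divisors, f d) * (1 - (n : ℝ) / N) := by
  calc ∑ d ∈ Finset.Icc 1 N, f d * wt N d
      = ∑ d ∈ Finset.Icc 1 N, ∑ n ∈ Finset.Icc 1 N,
          if d ∣ n then 2 / N * (f d * (1 - (n : ℝ) / N)) else 0 := by
        refine Finset.sum_congr rfl fun d _ => ?_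
        rw [wt, Finset.sum_filter, Finset.mul_sum, Finset.mul_sum]
        refine Finset.sum_congr rfl fun n _ => ?_
        split_ifs <;> ring
    _ = ∑ n ∈ Finset.Icc 1 N, ∑ d ∈ Finset.Icc 1 N,
          if d ∣ n then 2 / N * (f d * (1 - (n : ℝ) / N)) else 0 := Finset.sum_comm
    _ = _ := by
        rw [Finset.mul_sum]
        refine Finset.sum_congr rfl fun n hn => ?_
        rw [Finset.mem_Icc] at hn
        have h1 : (Finset.Icc 1 N).filter (fun d => d ∣ n) = n.divisors := by
          ext d
          rw [Finset.mem_filter, Finset.mem_Icc, Nat.mem_divisors]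
          constructor
          · exact fun h => ⟨h.2, by omega⟩
          · intro h
            have := Nat.le_of_dvd (by omega) h.1
            exact ⟨⟨Nat.pos_of_dvd_of_pos h.1 (by omega), by omega⟩, h.1⟩
        rw [← Finset.sum_filter, h1, ← Finset.mul_sum, ← Finset.sum_mul]

lemma sum_wt_le_trunc (hc : IsSignChar c) (P : Finset ℕ) (N : ℕ) :
    ∑ d ∈ Finset.Icc 1 N, c d * wt N d ≤ ∑ d ∈ Finset.Icc 1 N, trunc c P d * wt N d := by
  rw [sum_mul_wt, sum_mul_wt]
  refine mul_le_mul_of_nonneg_left (Finset.sum_le_sum fun n hn => ?_) (by positivity)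
  rw [Finset.mem_Icc] at hn
  exact mul_le_mul_of_nonneg_right (hc.sum_divisors_le P (by omega)) (fejer_nonneg hn.2)

end IsSignChar

/-- Bonferroni inequalities. The factors `1 - u i` may be negative, but their products stay below `1`
in absolute value, which is all the induction needs. -/
lemma bonferroni_aux {ι : Type*} (P : Finset ι) {u : ι → ℝ} (h0 : ∀ i, 0 ≤ u i) (h2 : ∀ i, u i ≤ 2) :
    ∏ i ∈ P, (1 - u i) ≤ 1 ∧ 1 - ∑ i ∈ P, u i ≤ ∏ i ∈ P, (1 - u i) ∧
    ∏ i ∈ P, (1 - u i) ≤ 1 - ∑ i ∈ P, u i + 1 / 2 * ((∑ i ∈ P, u i) ^ 2 - ∑ i ∈ P, u i ^ 2) := by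
  classical
  have habs : ∀ Q : Finset ι, ∏ i ∈ Q, (1 - u i) ≤ 1 := fun Q => by
    refine (le_abs_self _).trans ?_
    rw [Finset.abs_prod]
    exact Finset.prod_le_one (fun _ _ => abs_nonneg _) fun i _ =>
      abs_le.2 ⟨by linarith [h2 i], by linarith [h0 i]⟩
  refine ⟨habs P, ?_⟩
  induction P using Finset.induction_on with
  | empty => simp
  | insert a P ha ih =>
    rw [Finset.prod_insert ha, Finset.sum_insert ha, Finset.sum_insert ha]
    have h := habs P
    obtain ⟨i1, i2⟩ := ih
    have := h0 a
    constructor <;> nlinarith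

/-! ### Bonferroni bounds -/

/-- The amount `1 - c (p ^ v_p(d))` by which `c` falls short of `1` at the `p`-part of `d`. -/
noncomputable def defect (c : ℕ → ℝ) (p d : ℕ) : ℝ := 1 - c p ^ d.factorization p

/-- The weighted sum of the defects at `p`: the first-order gain due to the prime `p` over the trivial
bound `∑ wt N d`. -/
noncomputable def saving (c : ℕ → ℝ) (N p : ℕ) : ℝ :=
  ∑ d ∈ Finset.Icc 1 N, defect c p d * wt N d

namespace IsSignChar
variable {c : ℕ → ℝ}

lemma defect_nonneg (hc : IsSignChar c) (p d : ℕ) : 0 ≤ defect c p d := by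
  have : c p ^ d.factorization p ≤ 1 := by
    refine (le_abs_self _).trans ?_
    rw [abs_pow]
    exact pow_le_one₀ (abs_nonneg _) (hc.abs_le p)
  rw [defect]; linarith

lemma defect_le (hc : IsSignChar c) {p d : ℕ} (hp : p.Prime) (hd : d ≠ 0) :
    defect c p d ≤ if p ∣ d then 1 - c p else 0 := by
  split_ifs with h
  · have h1 : d.factorization p ≠ 0 := (hp.factorization_pos_of_dvd hd h).ne'
    rw [defect]
    rcases hc.val p with h | h | h
    · rw [h]
      rcases neg_one_pow_eq_or ℝ (d.factorization p) with h | h <;> rw [h] <;> norm_num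
    · rw [h, zero_pow h1]
    · rw [h, one_pow]
  · rw [defect, Nat.factorization_eq_zero_of_not_dvd h]; simp

lemma defect_le_two (hc : IsSignChar c) (p d : ℕ) : defect c p d ≤ 2 := by
  have : -1 ≤ c p ^ d.factorization p := by
    refine neg_le_of_abs_le ?_
    rw [abs_pow]
    exact pow_le_one₀ (abs_nonneg _) (hc.abs_le p)
  rw [defect]; linarith

/-- The bound only uses the integers exactly divisible by `p`, where the defect is `1 - c p`. -/
lemma le_defect (hc : IsSignChar c) {p d : ℕ} (hp : p.Prime) (hd : d ≠ 0) :
    ((if p ∣ d then 1 - c p else 0) - if p ^ 2 ∣ d then 1 - c p else 0) ≤ defect c p d := by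
  by_cases h : p ^ 2 ∣ d
  · rw [if_pos h, if_pos ((dvd_pow_self p two_ne_zero).trans h), sub_self]
    exact hc.defect_nonneg p d
  · rw [if_neg h, sub_zero]
    split_ifs with h1
    · have h2 : d.factorization p = 1 := by
        have := hp.factorization_pos_of_dvd hd h1
        have h3 : ¬ 2 ≤ d.factorization p := fun h4 =>
          h ((hp.pow_dvd_iff_le_factorization hd).2 h4)
        omega
      rw [defect, h2, pow_one]
    · exact hc.defect_nonneg p d

lemma defect_zero_le (hc : IsSignChar c) (p : ℕ) : 0 ≤ 1 - c p := by
  linarith [(_root_.abs_le.1 (hc.abs_le p)).2]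

lemma sum_ite_wt (x : ℝ) (N m : ℕ) :
    ∑ d ∈ Finset.Icc 1 N, (if m ∣ d then x else 0) * wt N d = x * wtMul N m := by
  rw [wtMul, Finset.sum_filter, Finset.mul_sum]
  refine Finset.sum_congr rfl fun d _ => ?_
  split_ifs <;> ring

lemma saving_nonneg (hc : IsSignChar c) (N p : ℕ) : 0 ≤ saving c N p :=
  Finset.sum_nonneg fun _ _ => mul_nonneg (hc.defect_nonneg _ _) (wt_nonneg _ _)

lemma le_saving (hc : IsSignChar c) (N : ℕ) {p : ℕ} (hp : p.Prime) :
    (1 - c p) * (wtMul N p - wtMul N (p ^ 2)) ≤ saving c N p := by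
  rw [mul_sub, ← sum_ite_wt, ← sum_ite_wt, ← Finset.sum_sub_distrib]
  refine Finset.sum_le_sum fun d hd => ?_
  rw [Finset.mem_Icc] at hd
  rw [← sub_mul]
  exact mul_le_mul_of_nonneg_right (hc.le_defect hp (by omega)) (wt_nonneg _ _)

lemma pair_le (hc : IsSignChar c) (N : ℕ) {p r : ℕ} (hp : p.Prime) (hr : r.Prime) (hpr : p ≠ r) :
    ∑ d ∈ Finset.Icc 1 N, defect c p d * defect c r d * wt N d ≤
      (1 - c p) * (1 - c r) * wtMul N (p * r) := by
  rw [← sum_ite_wt]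
  refine Finset.sum_le_sum fun d hd => mul_le_mul_of_nonneg_right ?_ (wt_nonneg _ _)
  rw [Finset.mem_Icc] at hd
  have h1 := hc.defect_le hp (d := d) (by omega)
  have h2 := hc.defect_le hr (d := d) (by omega)
  refine (mul_le_mul h1 h2 (hc.defect_nonneg _ _) ((hc.defect_nonneg _ _).trans h1)).trans ?_
  have hco : p.Coprime r := (Nat.coprime_primes hp hr).2 hpr
  by_cases h : p * r ∣ d
  · rw [if_pos h, if_pos ((dvd_mul_right _ _).trans h), if_pos ((dvd_mul_left _ _).trans h)]
  · rw [if_neg h]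
    by_cases h3 : p ∣ d
    · rw [if_neg (fun h4 => h (hco.mul_dvd_of_dvd_of_dvd h3 h4)), mul_zero]
    · rw [if_neg h3, zero_mul]

/-- Only the primes of `P` are kept, by the monotonicity in `sum_wt_le_trunc`; the product over `P` is
then bounded by the second Bonferroni inequality. -/
lemma sum_le_bonferroni (hc : IsSignChar c) (N : ℕ) {P : Finset ℕ} (hP : ∀ p ∈ P, p.Prime) :
    ∑ d ∈ Finset.Icc 1 N, c d * wt N d ≤ ∑ d ∈ Finset.Icc 1 N, wt N d - ∑ p ∈ P, saving c N p
      + 1 / 2 * ∑ p ∈ P, ∑ r ∈ P.erase p, (1 - c p) * (1 - c r) * wtMul N (p * r) := by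
  refine (hc.sum_wt_le_trunc P N).trans ?_
  have h1 : ∀ d, trunc c P d ≤ 1 - ∑ p ∈ P, defect c p d
      + 1 / 2 * ∑ p ∈ P, ∑ r ∈ P.erase p, defect c p d * defect c r d := by
    intro d
    have h := (bonferroni_aux P (u := fun p => defect c p d) (fun p => hc.defect_nonneg p d)
      (fun p => hc.defect_le_two p d)).2.2
    have e1 : ∏ p ∈ P, (1 - defect c p d) = trunc c P d :=
      Finset.prod_congr rfl fun p _ => by rw [defect]; ring
    have e2 : ∑ p ∈ P, ∑ r ∈ P.erase p, defect c p d * defect c r d =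
        (∑ p ∈ P, defect c p d) ^ 2 - ∑ p ∈ P, defect c p d ^ 2 := by
      rw [sq, Finset.sum_mul_sum, ← Finset.sum_sub_distrib]
      refine Finset.sum_congr rfl fun p hp => ?_
      rw [← Finset.add_sum_erase P _ hp]; ring
    rw [e2, ← e1]
    exact h
  calc ∑ d ∈ Finset.Icc 1 N, trunc c P d * wt N d
      ≤ ∑ d ∈ Finset.Icc 1 N, (1 - ∑ p ∈ P, defect c p d
      + 1 / 2 * ∑ p ∈ P, ∑ r ∈ P.erase p, defect c p d * defect c r d) * wt N d :=
        Finset.sum_le_sum fun d _ => mul_le_mul_of_nonneg_right (h1 d) (wt_nonneg _ _)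
    _ = ∑ d ∈ Finset.Icc 1 N, wt N d - ∑ p ∈ P, saving c N p
        + 1 / 2 * ∑ p ∈ P, ∑ r ∈ P.erase p,
          ∑ d ∈ Finset.Icc 1 N, defect c p d * defect c r d * wt N d := by
        simp only [add_mul, sub_mul, one_mul, Finset.sum_add_distrib, Finset.sum_sub_distrib]
        congr 1
        · congr 1
          simp only [saving, Finset.sum_mul]
          exact Finset.sum_comm
        · simp only [mul_assoc (1 / 2 : ℝ)]
          rw [← Finset.mul_sum]
          congr 1
          simp only [Finset.sum_mul]
          rw [Finset.sum_comm]
          refine Finset.sum_congr rfl fun p _ => ?_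
          rw [Finset.sum_comm]
    _ ≤ _ := by
        gcongr with p hp r hr
        rw [Finset.mem_erase] at hr
        exact hc.pair_le N (hP p hp) (hP r hr.2) hr.1.symm

/-- If the Fejér mean of `c` is small then `c p ≠ 1` for many primes: by the first Bonferroni
inequality `1 - c n ≤ ∑_{p ∣ n} (1 - c p)`, and taking Fejér means of both sides gives the claim. -/
lemma le_sum_div (hc : IsSignChar c) {N : ℕ} (hN : 0 < N) {D : ℝ}
    (hD : ∑ n ∈ Finset.Icc 1 N, c n * (1 - (n : ℝ) / N) ≤ D / 2) :
    1 - 1 / N - D / N ≤ ∑ p ∈ (Finset.Icc 1 N).filter Nat.Prime, (1 - c p) / p := by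
  have hN' : (0 : ℝ) < N := by exact_mod_cast hN
  set P := (Finset.Icc 1 N).filter Nat.Prime with hPdef
  have hP : ∀ p ∈ P, p.Prime := fun p hp => (Finset.mem_filter.1 hp).2
  have h1 : ∀ n ∈ Finset.Icc 1 N, 1 - c n ≤ ∑ p ∈ P, if p ∣ n then 1 - c p else 0 := by
    intro n hn
    rw [Finset.mem_Icc] at hn
    have e : c n = ∏ p ∈ P, (1 - defect c p n) := by
      rw [hc.eq_trunc (P := P) (by omega : n ≠ 0) ?_, trunc]
      · exact Finset.prod_congr rfl fun p _ => by rw [defect]; ring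
      · intro p hp
        have hp' := Nat.prime_of_mem_primeFactors hp
        rw [hPdef, Finset.mem_filter, Finset.mem_Icc]
        exact ⟨⟨hp'.one_lt.le, (Nat.le_of_mem_primeFactors hp).trans hn.2⟩, hp'⟩
    have h := (bonferroni_aux P (u := fun p => defect c p n) (fun p => hc.defect_nonneg p n)
      (fun p => hc.defect_le_two p n)).2.1
    rw [← e] at h
    have h3 : ∑ p ∈ P, defect c p n ≤ ∑ p ∈ P, if p ∣ n then 1 - c p else 0 :=
      Finset.sum_le_sum fun p hp => hc.defect_le (hP p hp) (by omega)
    linarith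
  have h2 : ∑ n ∈ Finset.Icc 1 N, (1 - c n) * (1 - (n : ℝ) / N) ≤
      ∑ p ∈ P, (1 - c p) * (N / (2 * p)) := by
    calc _ ≤ ∑ n ∈ Finset.Icc 1 N, (∑ p ∈ P, if p ∣ n then 1 - c p else 0) * (1 - (n : ℝ) / N) :=
          Finset.sum_le_sum fun n hn => mul_le_mul_of_nonneg_right (h1 n hn)
            (fejer_nonneg (Finset.mem_Icc.1 hn).2)
      _ = ∑ p ∈ P, (1 - c p) * ∑ n ∈ (Finset.Icc 1 N).filter (p ∣ ·), (1 - (n : ℝ) / N) := by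
          simp only [Finset.sum_mul]
          rw [Finset.sum_comm]
          refine Finset.sum_congr rfl fun p _ => ?_
          rw [Finset.sum_filter, Finset.mul_sum]
          exact Finset.sum_congr rfl fun n _ => by split_ifs <;> ring
      _ ≤ _ := by
          refine Finset.sum_le_sum fun p hp => mul_le_mul_of_nonneg_left ?_ (hc.defect_zero_le p)
          have hp0 := (hP p hp).pos
          have hp' : (0 : ℝ) < p := by exact_mod_cast hp0
          rw [sum_multiples_fejer N hp0]
          set K : ℝ := ((N / p : ℕ) : ℝ)
          have hK : 0 ≤ K := by positivity
          have : (N : ℝ) / (2 * p) - (K - p * K * (K + 1) / (2 * N)) =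
              ((N - p * K) ^ 2 + p ^ 2 * K) / (2 * p * N) := by
            field_simp; ring
          have h : 0 ≤ ((N - p * K) ^ 2 + p ^ 2 * K) / (2 * p * N) := by positivity
          linarith
  have h3 : ∑ n ∈ Finset.Icc 1 N, (1 - (n : ℝ) / N) = (N - 1) / 2 := by
    rw [Finset.sum_sub_distrib, ← Finset.sum_div, sum_Icc_id]
    simp; field_simp; ring
  have h6 : ∑ n ∈ Finset.Icc 1 N, (1 - c n) * (1 - (n : ℝ) / N) =
      (N - 1) / 2 - ∑ n ∈ Finset.Icc 1 N, c n * (1 - (n : ℝ) / N) := by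
    rw [← h3, ← Finset.sum_sub_distrib]
    exact Finset.sum_congr rfl fun n _ => by ring
  have h4 : ∑ p ∈ P, (1 - c p) * ((N : ℝ) / (2 * p)) = N / 2 * ∑ p ∈ P, (1 - c p) / p := by
    rw [Finset.mul_sum]
    exact Finset.sum_congr rfl fun p hp => by
      have hp' : (p : ℝ) ≠ 0 := by exact_mod_cast (hP p hp).ne_zero
      field_simp
  rw [h4, h6] at h2
  have h5 : 1 - 1 / (N : ℝ) - D / N = 2 / N * ((N - 1) / 2 - D / 2) := by field_simp
  rw [h5]
  calc _ ≤ 2 / (N : ℝ) * (N / 2 * ∑ p ∈ P, (1 - c p) / p) :=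
        mul_le_mul_of_nonneg_left (by linarith) (by positivity)
    _ = _ := by field_simp

end IsSignChar

/-! ### Mertens bounds for primes -/

lemma log_factorial_eq_sum (n : ℕ) : Real.log (n.factorial : ℝ) =
    ∑ d ∈ Finset.Icc 1 n, ArithmeticFunction.vonMangoldt d * ((n / d : ℕ) : ℝ) := by
  have h1 : Real.log (n.factorial : ℝ) = ∑ m ∈ Finset.Icc 1 n, Real.log m := by
    induction n with
    | zero => simp
    | succ n ih =>
      rw [Finset.sum_Icc_succ_top (by omega), ← ih, Nat.factorial_succ, Nat.cast_mul,
        Real.log_mul (by positivity) (by positivity), add_comm]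
  rw [h1]
  calc ∑ m ∈ Finset.Icc 1 n, Real.log m
      = ∑ m ∈ Finset.Icc 1 n, ∑ d ∈ Finset.Icc 1 n,
          if d ∣ m then ArithmeticFunction.vonMangoldt d else 0 := by
        refine Finset.sum_congr rfl fun m hm => ?_
        rw [Finset.mem_Icc] at hm
        rw [← ArithmeticFunction.vonMangoldt_sum, ← Finset.sum_filter]
        refine Finset.sum_congr ?_ fun _ _ => rfl
        ext d
        rw [Finset.mem_filter, Finset.mem_Icc, Nat.mem_divisors]
        constructor
        · intro h
          have := Nat.le_of_dvd (by omega) h.1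
          exact ⟨⟨Nat.pos_of_dvd_of_pos h.1 (by omega), by omega⟩, h.1⟩
        · exact fun h => ⟨h.2, by omega⟩
    _ = _ := by
        rw [Finset.sum_comm]
        refine Finset.sum_congr rfl fun d hd => ?_
        rw [Finset.mem_Icc] at hd
        rw [← Finset.sum_filter, sum_multiples (fun _ => ArithmeticFunction.vonMangoldt d) hd.1]
        simp [mul_comm]

lemma log_factorial_le {n : ℕ} (hn : 1 ≤ n) :
    Real.log (n.factorial : ℝ) ≤ n * Real.log n - n + 1 + Real.log n := by
  induction n, hn using Nat.le_induction with
  | base => simp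
  | succ n hn ih =>
    have hn' : (0 : ℝ) < n := by exact_mod_cast hn
    rw [Nat.factorial_succ, Nat.cast_mul, Real.log_mul (by positivity) (by positivity)]
    have h := Real.one_sub_inv_le_log_of_pos (show 0 < ((n : ℝ) + 1) / n by positivity)
    rw [inv_div, Real.log_div (by positivity) (by positivity)] at h
    have h2 : ((n : ℝ) + 1) * (1 - n / (n + 1)) = 1 := by field_simp; ring
    have h3 := mul_le_mul_of_nonneg_left h (by positivity : (0 : ℝ) ≤ n + 1)
    push_cast
    linarith

/-- `A(n) = ∑_{d ≤ n} Λ(d) / d`. -/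
noncomputable def mertens (n : ℕ) : ℝ :=
  ∑ d ∈ Finset.Icc 1 n, ArithmeticFunction.vonMangoldt d / d

/-- Legendre's formula and Stirling's lower bound. -/
lemma le_mertens {n : ℕ} (hn : 1 ≤ n) : Real.log n - 1 ≤ mertens n := by
  have hn' : (1 : ℝ) ≤ n := by exact_mod_cast hn
  have h1 := Stirling.le_log_factorial_stirling (n := n) (by omega)
  have h2 : Real.log (n.factorial : ℝ) ≤ n * mertens n := by
    rw [log_factorial_eq_sum, mertens, Finset.mul_sum]
    refine Finset.sum_le_sum fun d _ => ?_
    have := mul_le_mul_of_nonneg_left (Nat.cast_div_le (α := ℝ) (m := n) (n := d))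
      (ArithmeticFunction.vonMangoldt_nonneg (n := d))
    refine this.trans (le_of_eq (by ring))
  have h3 := Real.log_nonneg hn'
  have h4 : 0 ≤ Real.log (2 * Real.pi) := Real.log_nonneg (by linarith [Real.pi_gt_three])
  refine le_of_mul_le_mul_left ?_ (by linarith : (0 : ℝ) < n)
  linarith

/-- Legendre's formula again; the fractional parts contribute at most `ψ(n) ≤ n log 4 + 2 √n log n`. -/
lemma mertens_le {n : ℕ} (hn : 1 ≤ n) : mertens n ≤
    Real.log n - 1 + Real.log 4 + (Real.log n + 1) / n + 2 * Real.log n / √n := by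
  have hn' : (1 : ℝ) ≤ n := by exact_mod_cast hn
  have hn0 : (0 : ℝ) < n := by linarith
  have h1 := log_factorial_le hn
  have h5 := Chebyshev.psi_le hn'
  have h2 : n * mertens n ≤ Real.log (n.factorial : ℝ) + Chebyshev.psi n := by
    have h6 : Chebyshev.psi n = ∑ d ∈ Finset.Icc 1 n, ArithmeticFunction.vonMangoldt d := by
      rw [Chebyshev.psi, Nat.floor_natCast]; rfl
    rw [log_factorial_eq_sum, mertens, Finset.mul_sum, h6, ← Finset.sum_add_distrib]
    refine Finset.sum_le_sum fun d hd => ?_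
    rw [Finset.mem_Icc] at hd
    have hd' : (0 : ℝ) < d := by exact_mod_cast hd.1
    have h7 : (n : ℝ) / d ≤ ((n / d : ℕ) : ℝ) + 1 := by
      rw [div_le_iff₀ hd']
      have := (Nat.lt_div_mul_add hd.1 (a := n)).le
      have h : n ≤ (n / d + 1) * d := by rw [add_mul, one_mul]; exact this
      exact_mod_cast h
    have := mul_le_mul_of_nonneg_left h7 (ArithmeticFunction.vonMangoldt_nonneg (n := d))
    calc _ = ArithmeticFunction.vonMangoldt d * ((n : ℝ) / d) := by ring
      _ ≤ _ := this
      _ = _ := by ring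
  refine le_of_mul_le_mul_left ?_ hn0
  have h8 : (n : ℝ) * (Real.log n - 1 + Real.log 4 + (Real.log n + 1) / n + 2 * Real.log n / √n) =
      n * Real.log n - n + Real.log 4 * n + (Real.log n + 1) + 2 * √n * Real.log n := by
    have : (n : ℝ) * (2 * Real.log n / √n) = 2 * √n * Real.log n := by
      have hs : √(n : ℝ) ≠ 0 := by positivity
      field_simp
      rw [Real.sq_sqrt hn0.le, mul_comm]
    rw [← this]
    field_simp
  rw [h8]
  linarith

lemma log_four_le : Real.log 4 ≤ 13863 / 10000 := by
  rw [show (4 : ℝ) = 2 ^ 2 by norm_num, Real.log_pow]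
  have := Real.log_two_lt_d9
  push_cast; linarith

lemma log_error_le {N : ℕ} (hN : 10 ^ 26 ≤ N) :
    (Real.log N + 1) / N + 2 * Real.log N / √N ≤ 1 / 1000 := by
  have hN' : (10 : ℝ) ^ 26 ≤ N := by exact_mod_cast hN
  have hN0 : (0 : ℝ) < N := lt_of_lt_of_le (by positivity) hN'
  set s := √(N : ℝ) with hs
  have hs2 : s ^ 2 = N := Real.sq_sqrt hN0.le
  have hs13 : (10 : ℝ) ^ 13 ≤ s := Real.le_sqrt_of_sq_le (by rw [← pow_mul]; exact hN')
  have hs0 : 0 < s := lt_of_lt_of_le (by positivity) hs13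
  set r := √s with hr
  have hr2 : r ^ 2 = s := Real.sq_sqrt hs0.le
  have hr6 : (10 : ℝ) ^ 6 ≤ r := Real.le_sqrt_of_sq_le (by norm_num at hs13 ⊢; linarith)
  have hr0 : 0 < r := lt_of_lt_of_le (by positivity) hr6
  have hlog : Real.log N ≤ 4 * r := by
    rw [← hs2, ← hr2, ← pow_mul, Real.log_pow]
    have := Real.log_le_sub_one_of_pos hr0
    push_cast; linarith
  have h1 : 2 * Real.log N / s ≤ 8 / r := by
    rw [div_le_div_iff₀ hs0 hr0, ← hr2]
    nlinarith
  have h2 : (Real.log N + 1) / N ≤ 8 / r := by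
    have h : (1 : ℝ) ≤ r := by linarith
    have h3 : (1 : ℝ) ≤ r ^ 2 := one_le_pow₀ h
    have h4 : (Real.log N + 1) * r ≤ 5 * r ^ 2 := by nlinarith
    have h5 : (N : ℝ) = r ^ 2 * r ^ 2 := by rw [hr2, ← hs2, sq]
    rw [div_le_div_iff₀ hN0 hr0]
    nlinarith
  have h3 : 8 / r ≤ 8 / 10 ^ 6 := div_le_div_of_nonneg_left (by norm_num) (by positivity) hr6
  norm_num at h3
  linarith

/-- The constant `7 / 5` leaves room over `log 4 < 1.3864`. -/
lemma sum_log_div_le {N : ℕ} (hN : 10 ^ 26 ≤ N) {v : ℝ} (hv : 10 ≤ v) (hvN : v ≤ Real.log N) :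
    ∑ p ∈ ((Finset.Icc 1 N).filter Nat.Prime).filter (fun p : ℕ => v ≤ Real.log p),
      Real.log p / p ≤ Real.log N - v + 7 / 5 := by
  set t := Real.exp v with ht
  have ht0 : 1000 ≤ t := by
    have := Real.pow_div_factorial_le_exp v (by linarith) 6
    have h3 : (10 : ℝ) ^ 6 ≤ v ^ 6 := pow_le_pow_left₀ (by norm_num) hv 6
    norm_num [Nat.factorial] at this h3
    linarith
  have hNpos : (0 : ℝ) < N := by exact_mod_cast (by omega : 0 < N)
  have htN : t ≤ N := by rw [ht, ← Real.le_log_iff_exp_le hNpos]; exact hvN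
  obtain ⟨k, hk⟩ : ∃ k, ⌈t⌉₊ = k + 1 :=
    Nat.exists_eq_succ_of_ne_zero (Nat.ceil_pos.2 (by linarith)).ne'
  have hkt : t - 1 ≤ k := by
    have := Nat.le_ceil t
    rw [hk] at this; push_cast at this; linarith
  have hkN : k ≤ N := by
    have := Nat.ceil_le.2 htN
    omega
  have hk1 : 1 ≤ k := by
    have : (0 : ℝ) < k := by linarith
    exact_mod_cast this
  have h1 : ∑ p ∈ ((Finset.Icc 1 N).filter Nat.Prime).filter (fun p : ℕ => v ≤ Real.log p),
      Real.log p / p ≤ mertens N - mertens k := by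
    have e : mertens N - mertens k = ∑ d ∈ Finset.Ioc k N, ArithmeticFunction.vonMangoldt d / d := by
      have := Finset.sum_Ioc_consecutive
        (fun d : ℕ => ArithmeticFunction.vonMangoldt d / (d : ℝ)) (Nat.zero_le k) hkN
      have hI : ∀ n : ℕ, Finset.Icc 1 n = Finset.Ioc 0 n := fun n => by ext; simp; omega
      rw [mertens, mertens, hI, hI, ← this]; ring
    rw [e]
    calc _ = ∑ p ∈ ((Finset.Icc 1 N).filter Nat.Prime).filter (fun p : ℕ => v ≤ Real.log p),
        ArithmeticFunction.vonMangoldt p / p := by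
          refine Finset.sum_congr rfl fun p hp => ?_
          rw [Finset.mem_filter, Finset.mem_filter] at hp
          rw [ArithmeticFunction.vonMangoldt_apply_prime hp.1.2]
      _ ≤ _ := by
          refine Finset.sum_le_sum_of_subset_of_nonneg ?_ fun d _ _ =>
            div_nonneg ArithmeticFunction.vonMangoldt_nonneg (by positivity)
          intro p hp
          rw [Finset.mem_filter, Finset.mem_filter, Finset.mem_Icc] at hp
          obtain ⟨⟨⟨hp1, hp2⟩, _⟩, hp4⟩ := hp
          rw [Finset.mem_Ioc]
          refine ⟨?_, hp2⟩
          have : t ≤ p := (Real.le_log_iff_exp_le (by exact_mod_cast hp1)).1 hp4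
          have := Nat.ceil_le.2 this
          omega
  refine h1.trans ?_
  have h2 := mertens_le (n := N) (by omega)
  have h3 := le_mertens hk1
  have h4 : v - 1 / 500 ≤ Real.log k := by
    have h5 : Real.log (t - 1) ≤ Real.log k := Real.log_le_log (by linarith) hkt
    have h6 := Real.one_sub_inv_le_log_of_pos (show 0 < (t - 1) / t from
      div_pos (by linarith) (by linarith))
    rw [inv_div, Real.log_div (by linarith) (by linarith), ht, Real.log_exp, ← ht] at h6
    have h7 : t / (t - 1) ≤ 1 + 1 / 500 := by
      rw [div_le_iff₀ (by linarith)]; linarith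
    linarith
  linarith [log_error_le hN, log_four_le]

open intervalIntegral in
/-- Partial summation in the form `(log p - Y) / p = (log p / p) ∫_Y^{log p} Y / v ^ 2 dv`: exchange
sum and integral and insert the Mertens bound `sum_log_div_le`. -/
lemma sum_prime_le {N : ℕ} (hN : 10 ^ 26 ≤ N) {Y : ℝ} (hY : 10 ≤ Y) (hYN : Y ≤ Real.log N) :
    ∑ p ∈ ((Finset.Icc 1 N).filter Nat.Prime).filter (fun p : ℕ => Y ≤ Real.log p),
      (Real.log p - Y) / p ≤ Y * (Real.log N + 7 / 5) * (1 / Y - 1 / Real.log N)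
        - Y * (Real.log (Real.log N) - Real.log Y) := by
  set X := Real.log N with hX
  set S := ((Finset.Icc 1 N).filter Nat.Prime).filter (fun p : ℕ => Y ≤ Real.log p) with hS
  have hpos : ∀ v ∈ Set.uIcc Y X, 0 < v := fun v hv => by
    rw [Set.uIcc_of_le hYN] at hv; linarith [hv.1]
  have hcont : ContinuousOn (fun v : ℝ => Y / v ^ 2) (Set.uIcc Y X) := by
    refine continuousOn_const.div (by fun_prop) fun v hv => ?_
    have := hpos v hv; positivity
  have hInt : IntervalIntegrable (fun v : ℝ => Y / v ^ 2) MeasureTheory.volume Y X :=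
    hcont.intervalIntegrable
  have hX' : ∀ p ∈ S, Y ≤ Real.log p ∧ Real.log p ≤ X := fun p hp => by
    rw [hS, Finset.mem_filter, Finset.mem_filter, Finset.mem_Icc] at hp
    exact ⟨hp.2, Real.log_le_log (by exact_mod_cast hp.1.1.1) (by exact_mod_cast hp.1.1.2)⟩
  have hterm : ∀ p ∈ S, (Real.log p - Y) / p =
      ∫ v in Y..X, Real.log p / p * Set.indicator {v | v ≤ Real.log p} (fun v => Y / v ^ 2) v := by
    intro p hp
    obtain ⟨h1, h2⟩ := hX' p hp
    rw [integral_const_mul, integral_indicator ⟨h1, h2⟩]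
    have hF : ∫ v in Y..Real.log p, Y / v ^ 2 = -Y / Real.log p - -Y / Y := by
      refine integral_eq_sub_of_hasDerivAt (f := fun v => -Y / v) (fun v hv => ?_) ?_
      · have hv0 : v ≠ 0 := by
          rw [Set.uIcc_of_le h1] at hv; linarith [hv.1]
        have := (hasDerivAt_const v (-Y)).div (hasDerivAt_id v) hv0
        refine this.congr_deriv ?_
        simp
      · refine (hcont.mono ?_).intervalIntegrable
        rw [Set.uIcc_of_le h1, Set.uIcc_of_le hYN]
        exact Set.Icc_subset_Icc_right h2
    rw [hF]
    have : Real.log p ≠ 0 := by linarith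
    have : Y ≠ 0 := by linarith
    field_simp
    ring
  have hmeas : ∀ p : ℕ, IntervalIntegrable (fun v => Real.log p / p *
      Set.indicator {v | v ≤ Real.log p} (fun v => Y / v ^ 2) v) MeasureTheory.volume Y X := by
    intro p
    refine IntervalIntegrable.const_mul ?_ _
    rw [intervalIntegrable_iff] at hInt ⊢
    exact hInt.indicator measurableSet_Iic
  rw [Finset.sum_congr rfl hterm, ← integral_finsetSum fun p _ => hmeas p]
  have hright : ∫ v in Y..X, Y / v ^ 2 * (X - v + 7 / 5) = Y * (X + 7 / 5) * (1 / Y - 1 / X)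
        - Y * (Real.log X - Real.log Y) := by
    rw [integral_eq_sub_of_hasDerivAt (f := fun v => -(Y * (X + 7 / 5)) / v - Y * Real.log v)]
    · ring
    · intro v hv
      have hv0 := (hpos v hv).ne'
      have := ((hasDerivAt_const v (-(Y * (X + 7 / 5)))).div (hasDerivAt_id v) hv0).sub
        ((Real.hasDerivAt_log hv0).const_mul Y)
      refine this.congr_deriv ?_
      simp
      field_simp
      ring
    · exact (hcont.mul (by fun_prop)).intervalIntegrable
  rw [← hright]
  refine integral_mono_on hYN ?_ (hcont.mul (by fun_prop)).intervalIntegrable fun v hv => ?_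
  · have h := IntervalIntegrable.sum S fun p _ => hmeas p
    rwa [Finset.sum_fn] at h
  · have h1 := sum_log_div_le hN (v := v) (by linarith [hv.1]) hv.2
    have hv0 : 0 ≤ Y / v ^ 2 := by positivity
    calc _ = Y / v ^ 2 * ∑ p ∈ ((Finset.Icc 1 N).filter Nat.Prime).filter (fun p : ℕ => v ≤ Real.log p),
          Real.log p / p := by
          have e : ((Finset.Icc 1 N).filter Nat.Prime).filter (fun p : ℕ => v ≤ Real.log p) =
              S.filter (fun p : ℕ => v ≤ Real.log p) := by
            ext p
            rw [hS]
            simp only [Finset.mem_filter]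
            exact ⟨fun h => ⟨⟨h.1, hv.1.trans h.2⟩, h.2⟩, fun h => ⟨h.1.1, h.2⟩⟩
          have e2 : ∑ p ∈ S.filter (fun p : ℕ => v ≤ Real.log p), Real.log p / p =
              ∑ p ∈ S, if v ≤ Real.log p then Real.log p / (p : ℝ) else 0 := Finset.sum_filter _ _
          rw [e, e2, Finset.mul_sum]
          refine Finset.sum_congr rfl fun p _ => ?_
          simp only [Set.indicator, Set.mem_ofPred_eq]
          split_ifs <;> ring
      _ ≤ _ := mul_le_mul_of_nonneg_left h1 hv0

/-! ### The bound for completely multiplicative functions -/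

/-- The lower bound of `le_wtMul` for `p * wtMul N p`, with `log (N / p)` written as a difference. -/
noncomputable def ell (N p : ℕ) : ℝ := Real.log N - Real.log p - 1 / 2

/-- A stand-in for `saving c N p` that ignores the multiples of `p ^ 2`; the positive part makes it
vanish when `p` is too close to `N`. -/
noncomputable def mass (c : ℕ → ℝ) (N p : ℕ) : ℝ := (1 - c p) / p * max (ell N p) 0

lemma three_quarters_le_log {p : ℕ} (hp : 3 ≤ p) : 3 / 4 ≤ Real.log p := by
  have h3 : (3 : ℝ) ≤ p := by exact_mod_cast hp
  have : (1 : ℝ) ≤ Real.log p := by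
    rw [Real.le_log_iff_exp_le (by linarith)]
    linarith [Real.exp_one_lt_three]
  linarith

/-- Greedy selection: dropping elements one at a time, the sum cannot skip an interval of length `b`. -/
lemma exists_subset_sum (A : Finset ℕ) {z : ℕ → ℝ} {a b : ℝ} (ha : 0 ≤ a) (hb : 0 ≤ b)
    (hz : ∀ p ∈ A, z p ≤ b) (h : a ≤ ∑ p ∈ A, z p) :
    ∃ P ⊆ A, a ≤ ∑ p ∈ P, z p ∧ ∑ p ∈ P, z p ≤ a + b := by
  classical
  induction A using Finset.induction_on with
  | empty => exact ⟨∅, subset_rfl, h, by simp; linarith⟩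
  | insert x A hx ih =>
    rcases le_or_gt a (∑ p ∈ A, z p) with h1 | h1
    · obtain ⟨P, hP, h2⟩ := ih (fun p hp => hz p (Finset.mem_insert_of_mem hp)) h1
      exact ⟨P, hP.trans (Finset.subset_insert _ _), h2⟩
    · refine ⟨insert x A, subset_rfl, h, ?_⟩
      rw [Finset.sum_insert hx]
      linarith [hz x (Finset.mem_insert_self _ _)]

namespace IsSignChar
variable {c : ℕ → ℝ}

lemma div_nonneg' (hc : IsSignChar c) (p : ℕ) : 0 ≤ (1 - c p) / p :=
  div_nonneg (hc.defect_zero_le p) (by positivity)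

lemma mass_nonneg (hc : IsSignChar c) (N p : ℕ) : 0 ≤ mass c N p :=
  mul_nonneg (hc.div_nonneg' p) (le_max_right _ _)

lemma div_le_two (hc : IsSignChar c) (p : ℕ) : (1 - c p) / p ≤ 2 / p := by
  have := (_root_.abs_le.1 (hc.abs_le p)).1
  gcongr
  linarith

lemma saving_ge_of_sq_le (hc : IsSignChar c) {N p : ℕ} (hp : p.Prime) (h : p ^ 2 ≤ N) :
    (1 - c p) / p * (ell N p - 1 / p * (ell N p - Real.log p + 3 / 4)) ≤ saving c N p := by
  have hp0 : (0 : ℝ) < p := by exact_mod_cast hp.pos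
  have hpN : p ≤ N := (Nat.le_self_pow two_ne_zero p).trans h
  have hN0 : (0 : ℝ) < N := by exact_mod_cast hp.pos.trans_le hpN
  have h1 := le_wtMul hp.pos hpN
  have h2 := wtMul_le (pow_pos hp.pos 2) h
  push_cast at h2
  rw [Real.log_div hN0.ne' hp0.ne'] at h1
  rw [Real.log_div hN0.ne' (by positivity), Real.log_pow] at h2
  push_cast at h2
  refine le_trans ?_ (hc.le_saving N hp)
  have e : (1 - c p) / p * (ell N p - 1 / p * (ell N p - Real.log p + 3 / 4)) =
      (1 - c p) * (1 / p * (Real.log N - Real.log p - 1 / 2)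
        - 1 / p ^ 2 * (Real.log N - 2 * Real.log p + 1 / 4)) := by
    rw [ell]; field_simp; ring
  rw [e]
  exact mul_le_mul_of_nonneg_left (by linarith) (hc.defect_zero_le p)

lemma saving_ge_of_lt_sq (hc : IsSignChar c) {N p : ℕ} (hp : p.Prime) (hpN : p ≤ N)
    (h : N < p ^ 2) : (1 - c p) / p * ell N p ≤ saving c N p := by
  have hp0 : (0 : ℝ) < p := by exact_mod_cast hp.pos
  have hN0 : (0 : ℝ) < N := by exact_mod_cast hp.pos.trans_le hpN
  have h1 := le_wtMul hp.pos hpN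
  have h3 := hc.le_saving N hp
  rw [wtMul_eq_zero h, sub_zero] at h3
  rw [Real.log_div hN0.ne' hp0.ne'] at h1
  refine le_trans ?_ h3
  have e : (1 - c p) / p * ell N p = (1 - c p) * (1 / p * (Real.log N - Real.log p - 1 / 2)) := by
    rw [ell]; ring
  rw [e]
  exact mul_le_mul_of_nonneg_left h1 (hc.defect_zero_le p)

lemma saving_ge_of_sq_le' (hc : IsSignChar c) {N p : ℕ} (hp : p.Prime) (hp7 : 7 ≤ p)
    (h : p ^ 2 ≤ N) (hl : 0 ≤ ell N p) :
    (1 - c p) / p * (6 / 7 * ell N p) ≤ saving c N p := by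
  refine le_trans (mul_le_mul_of_nonneg_left ?_ (hc.div_nonneg' p)) (hc.saving_ge_of_sq_le hp h)
  have hp0 : (7 : ℝ) ≤ p := by exact_mod_cast hp7
  have h1 := three_quarters_le_log (p := p) (by omega)
  have h2 : (1 : ℝ) / p ≤ 1 / 7 := one_div_le_one_div_of_le (by norm_num) hp0
  have h3 : (1 : ℝ) / p * (ell N p - Real.log p + 3 / 4) ≤ 1 / p * ell N p :=
    mul_le_mul_of_nonneg_left (by linarith) (by positivity)
  nlinarith

lemma mass_le_saving (hc : IsSignChar c) {N p : ℕ} (hp : p.Prime) (hp7 : 7 ≤ p) (hpN : p ≤ N) :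
    6 / 7 * mass c N p ≤ saving c N p := by
  rw [mass]
  rcases le_or_gt (ell N p) 0 with h | h
  · rw [max_eq_right h]; simpa using hc.saving_nonneg N p
  · rw [max_eq_left h.le]
    rcases le_or_gt (p ^ 2) N with h2 | h2
    · refine le_trans (le_of_eq (by ring)) (hc.saving_ge_of_sq_le' hp hp7 h2 h.le)
    · have := hc.saving_ge_of_lt_sq hp hpN h2
      have h4 := mul_nonneg (hc.div_nonneg' p) h.le
      linarith

/-- The pair terms are dominated by a product. With `a = log p`, `b = log r` at least `3 / 4`, the
inequality `(X - a - b + 1 / 4) (X - 5 / 4) ≤ (X - a - 1 / 2) (X - b - 1 / 2)` amounts to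
`0 ≤ (a - 3 / 4) (b - 3 / 4)`. -/
lemma pair_le_mass (hc : IsSignChar c) {N p r : ℕ} (hN : 5 / 4 < Real.log N) (hp : 3 ≤ p)
    (hr : 3 ≤ r) :
    (1 - c p) * (1 - c r) * wtMul N (p * r) ≤ mass c N p * mass c N r / (Real.log N - 5 / 4) := by
  have hM : 0 < Real.log N - 5 / 4 := by linarith
  rcases le_or_gt (p * r) N with h | h
  · have hp0 : (0 : ℝ) < p := by exact_mod_cast (by omega : 0 < p)
    have hr0 : (0 : ℝ) < r := by exact_mod_cast (by omega : 0 < r)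
    have hpr0 : 0 < p * r := Nat.mul_pos (by omega) (by omega)
    have hN0 : (0 : ℝ) < N := by exact_mod_cast hpr0.trans_le h
    have h1 := wtMul_le hpr0 h
    push_cast at h1
    rw [Real.log_div hN0.ne' (by positivity), Real.log_mul hp0.ne' hr0.ne'] at h1
    have hlog : Real.log p + Real.log r ≤ Real.log N := by
      rw [← Real.log_mul hp0.ne' hr0.ne']
      exact Real.log_le_log (by positivity) (by exact_mod_cast h)
    have hlp := three_quarters_le_log hp
    have hlr := three_quarters_le_log hr
    have hp1 : 0 ≤ ell N p := by rw [ell]; linarith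
    have hr1 : 0 ≤ ell N r := by rw [ell]; linarith
    rw [mass, mass, max_eq_left hp1, max_eq_left hr1]
    have h2 : Real.log N - (Real.log p + Real.log r) + 1 / 4 ≤
        ell N p * ell N r / (Real.log N - 5 / 4) := by
      rw [le_div_iff₀ hM, ell, ell]
      nlinarith [mul_nonneg (sub_nonneg.2 hlp) (sub_nonneg.2 hlr)]
    calc (1 - c p) * (1 - c r) * wtMul N (p * r)
        ≤ (1 - c p) * (1 - c r) * (1 / (p * r) * (ell N p * ell N r / (Real.log N - 5 / 4))) := by
          refine mul_le_mul_of_nonneg_left (h1.trans ?_)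
            (mul_nonneg (hc.defect_zero_le p) (hc.defect_zero_le r))
          exact mul_le_mul_of_nonneg_left h2 (by positivity)
      _ = _ := by field_simp
  · rw [wtMul_eq_zero h, mul_zero]
    exact div_nonneg (mul_nonneg (hc.mass_nonneg _ _) (hc.mass_nonneg _ _)) hM.le

/-- The Bonferroni bound as a quadratic in the total mass. -/
lemma sum_le_of_primes (hc : IsSignChar c) {N : ℕ} (hN : 5 / 4 < Real.log N) {P : Finset ℕ}
    (hP : ∀ p ∈ P, p.Prime ∧ 7 ≤ p) :
    ∑ d ∈ Finset.Icc 1 N, c d * wt N d ≤ ∑ d ∈ Finset.Icc 1 N, wt N d - ∑ p ∈ P, saving c N p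
      + (∑ p ∈ P, mass c N p) ^ 2 / (2 * (Real.log N - 5 / 4)) := by
  refine (hc.sum_le_bonferroni N fun p hp => (hP p hp).1).trans ?_
  have hM : 0 < Real.log N - 5 / 4 := by linarith
  have h1 : ∑ p ∈ P, ∑ r ∈ P.erase p, (1 - c p) * (1 - c r) * wtMul N (p * r) ≤
      (∑ p ∈ P, mass c N p) ^ 2 / (Real.log N - 5 / 4) := by
    calc _ ≤ ∑ p ∈ P, ∑ r ∈ P, mass c N p * mass c N r / (Real.log N - 5 / 4) := by
          refine Finset.sum_le_sum fun p hp => ?_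
          calc _ ≤ ∑ r ∈ P.erase p, mass c N p * mass c N r / (Real.log N - 5 / 4) := by
                refine Finset.sum_le_sum fun r hr => ?_
                have := (hP p hp).2
                have := (hP r (Finset.mem_of_mem_erase hr)).2
                exact hc.pair_le_mass hN (by omega) (by omega)
            _ ≤ _ := Finset.sum_le_sum_of_subset_of_nonneg (Finset.erase_subset _ _)
                fun r _ _ => div_nonneg (mul_nonneg (hc.mass_nonneg _ _) (hc.mass_nonneg _ _)) hM.le
      _ = _ := by
          rw [sq, Finset.sum_mul_sum, Finset.sum_div]
          exact Finset.sum_congr rfl fun p _ => by rw [Finset.sum_div]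
  have h2 : (∑ p ∈ P, mass c N p) ^ 2 / (2 * (Real.log N - 5 / 4)) =
      1 / 2 * ((∑ p ∈ P, mass c N p) ^ 2 / (Real.log N - 5 / 4)) := by
    field_simp
  rw [h2]
  linarith

end IsSignChar

lemma log_ge {N : ℕ} (hN : 10 ^ 26 ≤ N) : 596 / 10 ≤ Real.log N := by
  have h1 : ((2 : ℝ) ^ 86) ≤ N := by
    have : 2 ^ 86 ≤ N := le_trans (by norm_num) hN
    exact_mod_cast this
  have h2 := Real.log_le_log (by positivity) h1
  rw [Real.log_pow] at h2
  have := Real.log_two_gt_d9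
  push_cast at h2
  linarith

lemma log_ratio {X : ℝ} (hX : 0 < X) : 478 / 1000 ≤ Real.log X - Real.log (62 / 100 * X) := by
  have h1 : ((62 : ℝ) / 100) ^ 29 ≤ ((2 : ℝ) ^ 20)⁻¹ := by norm_num
  have h2 := Real.log_le_log (by positivity) h1
  rw [Real.log_pow, Real.log_inv, Real.log_pow] at h2
  rw [Real.log_mul (by norm_num) hX.ne']
  have := Real.log_two_gt_d9
  push_cast at h2
  linarith

namespace IsSignChar
variable {c : ℕ → ℝ}

/-- A lower bound for the total saving when `∑ (1 - c p) / p` is nearly `1`. Subject to `1 - c p ≤ 2`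
the cheapest configuration puts the defects on the largest primes; accordingly `saving c N p` is
bounded below by `(1 - c p) / p` times `X - 1 / 2 - Y`, minus the excess of `log p` over
`Y = 0.62 X`, which Mertens controls. The primes below `7` are irrelevant as `c p = 1` there. -/
lemma sum_saving_ge (hc : IsSignChar c) {N : ℕ} (hN : 10 ^ 26 ≤ N)
    (h2 : c 2 = 1) (h3 : c 3 = 1) (h5 : c 5 = 1)
    (hτ : 958 / 1000 ≤ ∑ p ∈ (Finset.Icc 1 N).filter Nat.Prime, (1 - c p) / p) :
    196 / 1000 * Real.log N - 155 / 100 ≤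
      ∑ p ∈ ((Finset.Icc 1 N).filter Nat.Prime).filter (7 ≤ ·), saving c N p := by
  set X := Real.log N with hX
  have hX0 : 596 / 10 ≤ X := log_ge hN
  set Y := 62 / 100 * X with hY
  set Q := (Finset.Icc 1 N).filter Nat.Prime with hQ
  set A := Q.filter (7 ≤ ·) with hA
  have hQp : ∀ p ∈ Q, p.Prime ∧ p ≤ N := fun p hp => by
    rw [hQ, Finset.mem_filter, Finset.mem_Icc] at hp
    exact ⟨hp.2, hp.1.2⟩
  have hterm : ∀ p ∈ A, (1 - c p) / p * (X - 1 / 2 - Y - max (Real.log p - Y) 0) ≤ saving c N p := by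
    intro p hp
    obtain ⟨hpQ, hp7⟩ := Finset.mem_filter.1 hp
    obtain ⟨hpp, hpN⟩ := hQp p hpQ
    have hp0 : (0 : ℝ) < p := by exact_mod_cast hpp.pos
    rcases le_or_gt (p ^ 2) N with h | h
    · have hlog : 2 * Real.log p ≤ X := by
        have := Real.log_le_log (by positivity) (show ((p : ℝ) ^ 2) ≤ N by exact_mod_cast h)
        rw [Real.log_pow] at this
        exact_mod_cast this
      have hl : X / 2 - 1 / 2 ≤ ell N p := by rw [ell]; linarith
      refine le_trans (mul_le_mul_of_nonneg_left ?_ (hc.div_nonneg' p))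
        (hc.saving_ge_of_sq_le' hpp hp7 h (by linarith))
      have := le_max_right (Real.log p - Y) 0
      linarith
    · refine le_trans (mul_le_mul_of_nonneg_left ?_ (hc.div_nonneg' p))
        (hc.saving_ge_of_lt_sq hpp hpN h)
      have := le_max_left (Real.log p - Y) 0
      rw [ell]
      linarith
  have hsum : ∑ p ∈ A, (1 - c p) / p = ∑ p ∈ Q, (1 - c p) / p := by
    refine Finset.sum_subset (Finset.filter_subset _ _) fun p hp hpA => ?_
    have hpp := (hQp p hp).1
    have h7 : p < 7 := by
      by_contra h
      exact hpA (Finset.mem_filter.2 ⟨hp, by omega⟩)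
    have : p = 2 ∨ p = 3 ∨ p = 5 := by
      interval_cases p <;> first | omega | (exfalso; revert hpp; norm_num)
    rcases this with rfl | rfl | rfl
    · simp [h2]
    · simp [h3]
    · simp [h5]
  have hpr := sum_prime_le hN (Y := Y) (by linarith) (by linarith)
  have hlast : ∑ p ∈ A, (1 - c p) / p * max (Real.log p - Y) 0 ≤
      2 * ∑ p ∈ Q.filter (fun p : ℕ => Y ≤ Real.log p), (Real.log p - Y) / p := by
    calc _ ≤ ∑ p ∈ Q, (1 - c p) / p * max (Real.log p - Y) 0 :=
          Finset.sum_le_sum_of_subset_of_nonneg (Finset.filter_subset _ _) fun p _ _ =>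
            mul_nonneg (hc.div_nonneg' p) (le_max_right _ _)
      _ ≤ ∑ p ∈ Q, if Y ≤ Real.log p then 2 * ((Real.log p - Y) / p) else 0 := by
          refine Finset.sum_le_sum fun p _ => ?_
          split_ifs with h
          · rw [max_eq_left (by linarith)]
            refine (mul_le_mul_of_nonneg_right (hc.div_le_two p) (by linarith)).trans
              (le_of_eq (by ring))
          · rw [max_eq_right (by linarith), mul_zero]
      _ = _ := by rw [← Finset.sum_filter, Finset.mul_sum]
  have hr := log_ratio (X := X) (by linarith)
  have hrY : Y * (X + 7 / 5) * (1 / Y - 1 / X) = 38 / 100 * (X + 7 / 5) := by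
    have : X ≠ 0 := by linarith
    rw [hY]; field_simp; ring
  rw [← hX, hrY] at hpr
  have hmul : 62 / 100 * X * (478 / 1000) ≤ Y * (Real.log X - Real.log Y) :=
    mul_le_mul_of_nonneg_left hr (by linarith)
  have hS := Finset.sum_le_sum hterm
  simp only [mul_sub _ _ (max _ _), Finset.sum_sub_distrib, ← Finset.sum_mul] at hS
  rw [hsum] at hS
  have hτ' : 958 / 1000 * (X - 1 / 2 - Y) ≤ (∑ p ∈ Q, (1 - c p) / p) * (X - 1 / 2 - Y) :=
    mul_le_mul_of_nonneg_right hτ (by linarith)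
  linarith

/-- A saving of `(log N) / 10 + 2.85` over the trivial bound. If `c p ≠ 1` for some `p ∈ {2, 3, 5}` that
prime alone provides it. Otherwise let `Z` be the total mass of the primes `p ≥ 7`, and
`X = log N`. If `Z ≥ X / 5`, a subset of the primes of mass between `X / 5` and `X / 2` suffices; if
`Z < X / 5`, the quadratic Bonferroni term is negligible and `sum_saving_ge` applies to all primes. -/
lemma sum_le (hc : IsSignChar c) {N : ℕ} (hN : 10 ^ 26 ≤ N) {D : ℝ} (hDN : 24 * D ≤ N)
    (hD : ∑ n ∈ Finset.Icc 1 N, c n * (1 - (n : ℝ) / N) ≤ D / 2) :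
    ∑ n ∈ Finset.Icc 1 N, c n * (1 / (n : ℝ) - 1 / N) ≤ 9 / 10 * Real.log N - 293 / 100 := by
  have hN' : (10 : ℝ) ^ 26 ≤ N := by exact_mod_cast hN
  have hN0 : (0 : ℝ) < N := lt_of_lt_of_le (by positivity) hN'
  have hinv : 1 / (N : ℝ) ≤ 1 / 1000000 := by
    refine one_div_le_one_div_of_le (by norm_num) (le_trans (by norm_num) hN')
  set X := Real.log N with hX
  have hX0 : 596 / 10 ≤ X := log_ge hN
  suffices hnet : ∑ d ∈ Finset.Icc 1 N, c d * wt N d ≤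
      ∑ d ∈ Finset.Icc 1 N, wt N d - (X / 10 + 285 / 100) by
    have h1 := sum_le_sum_wt (N := N) (by omega) hc.abs_le
    have h2 := sum_wt_le (N := N) (by omega)
    have h3 : ((N : ℝ) + 1) / (8 * N) = 1 / 8 + 1 / 8 * (1 / N) := by field_simp
    have h4 : Real.log (N + 1) ≤ X + 1 / N := by
      have h5 : (N : ℝ) + 1 = N * (1 + 1 / N) := by field_simp
      rw [h5, Real.log_mul hN0.ne' (by positivity)]
      have := Real.log_le_sub_one_of_pos (show 0 < 1 + 1 / (N : ℝ) by positivity)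
      linarith
    rw [h3] at h1 h2
    linarith
  -- The function `(1 / p) (1 - 1 / p)` is at least `0.16` for `p ≤ 5`.
  have hsmall : ∀ p : ℕ, (p = 2 ∨ p = 3 ∨ p = 5) → c p ≠ 1 → ∑ d ∈ Finset.Icc 1 N, c d * wt N d ≤
      ∑ d ∈ Finset.Icc 1 N, wt N d - (X / 10 + 285 / 100) := by
    intro p hp hcp
    have hpp : p.Prime := by rcases hp with rfl | rfl | rfl <;> norm_num
    have hB := hc.sum_le_bonferroni N (P := {p}) (by simpa using hpp)
    simp only [Finset.sum_singleton, Finset.erase_singleton, Finset.sum_empty, mul_zero,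
      add_zero] at hB
    have hs := hc.saving_ge_of_sq_le (N := N) hpp (by rcases hp with rfl | rfl | rfl <;> omega)
    have hg : 1 ≤ 1 - c p := by
      rcases hc.val p with h | h | h
      · rw [h]; norm_num
      · rw [h]; norm_num
      · exact absurd h hcp
    have hp2 : (2 : ℝ) ≤ p := by exact_mod_cast hpp.two_le
    have hlog1 : 693 / 1000 ≤ Real.log p := by
      have := Real.log_le_log (by norm_num) hp2
      linarith [Real.log_two_gt_d9]
    have hlog2 : Real.log p ≤ 21 / 10 := by
      have h8 : (p : ℝ) ≤ 2 ^ 3 := by rcases hp with rfl | rfl | rfl <;> norm_num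
      have := Real.log_le_log (by linarith) h8
      rw [Real.log_pow] at this
      push_cast at this
      linarith [Real.log_two_lt_d9]
    have hell : X - 26 / 10 ≤ ell N p := by rw [ell]; linarith
    have hpp2 : (1 : ℝ) / p ≤ 1 / 2 := one_div_le_one_div_of_le (by norm_num) hp2
    have hcoef : (16 : ℝ) / 100 ≤ 1 / p * (1 - 1 / p) := by
      rcases hp with rfl | rfl | rfl <;> norm_num
    have hpos : (0 : ℝ) ≤ 1 / p := by positivity
    have h6 : 16 / 100 * (X - 26 / 10) - 1 / 4 ≤
        1 / p * (ell N p - 1 / p * (ell N p - Real.log p + 3 / 4)) := by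
      have e : 1 / (p : ℝ) * (ell N p - 1 / p * (ell N p - Real.log p + 3 / 4)) =
          1 / p * (1 - 1 / p) * ell N p - 1 / p * (1 / p) * (3 / 4 - Real.log p) := by ring
      have h7 := mul_le_mul hcoef hell (by linarith) (by linarith)
      have h8 : (1 : ℝ) / p * (1 / p) ≤ 1 / 4 := by nlinarith
      have h9 : (1 : ℝ) / p * (1 / p) * (3 / 4 - Real.log p) ≤ 1 / 4 := by
        have : 0 ≤ (1 : ℝ) / p * (1 / p) := by positivity
        nlinarith
      rw [e]
      linarith
    have h10 : 1 / p * (ell N p - 1 / p * (ell N p - Real.log p + 3 / 4)) ≤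
        (1 - c p) / p * (ell N p - 1 / p * (ell N p - Real.log p + 3 / 4)) := by
      have e : (1 - c p) / p * (ell N p - 1 / p * (ell N p - Real.log p + 3 / 4)) = (1 - c p) *
        (1 / p * (ell N p - 1 / p * (ell N p - Real.log p + 3 / 4))) := by ring
      rw [e]
      exact le_mul_of_one_le_left (by linarith) hg
    linarith
  by_cases h2 : c 2 = 1
  swap
  · exact hsmall 2 (by simp) h2
  by_cases h3 : c 3 = 1
  swap
  · exact hsmall 3 (by simp) h3
  by_cases h5 : c 5 = 1
  swap
  · exact hsmall 5 (by simp) h5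
  set A := ((Finset.Icc 1 N).filter Nat.Prime).filter (7 ≤ ·) with hA
  have hAp : ∀ p ∈ A, p.Prime ∧ 7 ≤ p ∧ p ≤ N := fun p hp => by
    rw [hA, Finset.mem_filter, Finset.mem_filter, Finset.mem_Icc] at hp
    exact ⟨hp.1.2, hp.2, hp.1.1.2⟩
  have hM : 0 < X - 5 / 4 := by linarith
  rcases le_or_gt (X / 5) (∑ p ∈ A, mass c N p) with hZ | hZ
  · have hz : ∀ p ∈ A, mass c N p ≤ 2 / 7 * X := fun p hp => by
      obtain ⟨i1, i2, i3⟩ := hAp p hp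
      have hp7 : (7 : ℝ) ≤ p := by exact_mod_cast i2
      have h1 : (1 - c p) / p ≤ 2 / 7 :=
        (hc.div_le_two p).trans (div_le_div_of_nonneg_left (by norm_num) (by norm_num) hp7)
      have h2 : max (ell N p) 0 ≤ X := by
        refine max_le ?_ (by linarith)
        have := Real.log_nonneg (show (1 : ℝ) ≤ p by linarith)
        rw [ell]; linarith
      exact mul_le_mul h1 h2 (le_max_right _ _) (by norm_num)
    obtain ⟨P, hPA, hP1, hP2⟩ := exists_subset_sum A (b := 2 / 7 * X) (by linarith) (by linarith)
      hz hZ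
    have h := hc.sum_le_of_primes (N := N) (by linarith) (P := P)
      fun p hp => ⟨(hAp p (hPA hp)).1, (hAp p (hPA hp)).2.1⟩
    have hs : 6 / 7 * ∑ p ∈ P, mass c N p ≤ ∑ p ∈ P, saving c N p := by
      rw [Finset.mul_sum]
      refine Finset.sum_le_sum fun p hp => ?_
      obtain ⟨i1, i2, i3⟩ := hAp p (hPA hp)
      exact hc.mass_le_saving i1 i2 i3
    set Z := ∑ p ∈ P, mass c N p with hZdef
    -- by convexity in `Z`, the quadratic lies below its chord on `[X / 5, X / 2]`
    have hq : Z ^ 2 / (2 * (X - 5 / 4)) ≤ 1022 / 1000 * (7 / 20 * Z - X / 20) := by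
      rw [div_le_iff₀ (by linarith)]
      have h7 : 0 ≤ (Z - X / 5) * (X / 2 - Z) := mul_nonneg (by linarith) (by linarith)
      have h8 : X ≤ 1022 / 1000 * (X - 5 / 4) := by linarith
      have h9 := mul_le_mul_of_nonneg_left h8 (show 0 ≤ 7 / 10 * Z - X / 10 by linarith)
      nlinarith
    rw [← hX] at h
    linarith
  · -- Here `Z ^ 2 / (2 X) < X / 50`, against a total saving of about `0.196 X`.
    have h := hc.sum_le_of_primes (N := N) (by linarith) (P := A)
        fun p hp => ⟨(hAp p hp).1, (hAp p hp).2.1⟩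
    have hτ := hc.le_sum_div (N := N) (by omega) hD
    have hDN' : D / N ≤ 1 / 24 := by rw [div_le_iff₀ hN0]; linarith
    have hL := hc.sum_saving_ge hN h2 h3 h5 (by linarith)
    have hZ0 : 0 ≤ ∑ p ∈ A, mass c N p := Finset.sum_nonneg fun p _ => hc.mass_nonneg N p
    have hq : (∑ p ∈ A, mass c N p) ^ 2 / (2 * (X - 5 / 4)) ≤ 205 / 10000 * X := by
      rw [div_le_iff₀ (by linarith)]
      nlinarith
    rw [← hX] at h hL
    linarith

end IsSignChar

/-! ### The choice of the cut-off -/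

lemma isSignChar_re {q : ℕ} {χ : DirichletCharacter ℂ q} (hquad : χ ^ 2 = 1)
    (hreal : ∀ n : ZMod q, (χ n).im = 0) : IsSignChar fun n => (χ n).re where
  one := by simp
  mul a b := by simp [hreal]
  val n := by
    by_cases hn : IsUnit (n : ZMod q)
    · have h1 : χ n ^ 2 = 1 := by
        rw [← MulChar.pow_apply' χ two_ne_zero, hquad, MulChar.one_apply hn]
      rcases mul_self_eq_one_iff.1 ((sq (χ n)).symm.trans h1) with h | h <;> simp [h]
    · rw [χ.map_nonunit hn]; simp

lemma sum_range_eq_sum_Icc {N : ℕ} (f : ℕ → ℝ) (h0 : f 0 = 0) (hN : f N = 0) :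
    ∑ n ∈ Finset.range N, f n = ∑ n ∈ Finset.Icc 1 N, f n := by
  have h := Finset.sum_range_succ f N
  rw [hN, add_zero] at h
  rw [← h, Finset.sum_range_succ', h0, add_zero, Finset.range_eq_Ico,
    Finset.sum_Ico_add' f 0 N 1, zero_add]
  rfl

/-- The numerical inequality behind the theorem: `N` is `24 √q` up to rounding, and
`0.9 log 24 + 1.5 / 24 < 2.93`. -/
lemma log_cutoff {q N : ℕ} (hq : 0 < q) (h24 : 24 * √q ≤ N) (hN1 : (N : ℝ) ≤ 24 * √q + 1)
    (hN : 10 ^ 26 ≤ N) :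
    9 / 10 * Real.log N - 293 / 100 + 3 / 2 * √q / N ≤ 9 / 20 * Real.log q := by
  have hs : 0 < √(q : ℝ) := Real.sqrt_pos.2 (by exact_mod_cast hq)
  have hN' : (10 : ℝ) ^ 26 ≤ N := by exact_mod_cast hN
  have hN0 : (0 : ℝ) < N := lt_of_lt_of_le (by positivity) hN'
  have h1 : 3 / 2 * √q / N ≤ 1 / 16 := by
    rw [div_le_iff₀ hN0]; linarith
  have h2 : Real.log N ≤ Real.log (24 * √q) + 1 / 1000000 := by
    have h3 : (N : ℝ) = 24 * √q * (N / (24 * √q)) := by field_simp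
    rw [h3, Real.log_mul (by positivity) (by positivity)]
    have h4 := Real.log_le_sub_one_of_pos (show 0 < (N : ℝ) / (24 * √q) by positivity)
    have h5 : (N : ℝ) / (24 * √q) ≤ 1 + 1 / 1000000 := by
      rw [div_le_iff₀ (by positivity)]
      have : (10 : ℝ) ^ 7 ≤ 10 ^ 26 := by norm_num
      linarith
    linarith
  rw [Real.log_mul (by norm_num) hs.ne', Real.log_sqrt (by positivity)] at h2
  have h24log : Real.log 24 ≤ 3181 / 1000 := by
    have h6 : (24 : ℝ) ^ 17 ≤ 2 ^ 78 := by norm_num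
    have h7 := Real.log_le_log (by positivity) h6
    rw [Real.log_pow, Real.log_pow] at h7
    push_cast at h7
    linarith [Real.log_two_lt_d9]
  linarith

theorem L_one_le_nine_twentieths_log_of_even_quadratic
    (q : ℕ) (hq : 2 * 10 ^ 49 ≤ q)
    (χ : DirichletCharacter ℂ q) (hprim : χ.IsPrimitive)
    (hnonprincipal : χ ≠ 1) (hquadratic : χ ^ 2 = 1)
    (hreal : ∀ n : ZMod q, (χ n).im = 0)
    (hpar : χ (-1) = 1) :
    haveI : NeZero q := ⟨by omega⟩
    χ.LFunction 1 ≤ (((9 / 20) * Real.log q : ℝ) : ℂ) := by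
  have : NeZero q := ⟨by omega⟩
  show χ.LFunction 1 ≤ (((9 / 20) * Real.log q : ℝ) : ℂ)
  have hc := isSignChar_re hquadratic hreal
  set c : ℕ → ℝ := fun n => (χ n).re with hcdef
  have hs : (44 : ℝ) / 10 * 10 ^ 24 ≤ √q := by
    refine Real.le_sqrt_of_sq_le (le_trans (by norm_num) (show (2 * 10 ^ 49 : ℝ) ≤ q by
      exact_mod_cast hq))
  set N := ⌈24 * √(q : ℝ)⌉₊ with hNdef
  have h24 : 24 * √q ≤ N := Nat.le_ceil _
  have hN1 : (N : ℝ) ≤ 24 * √q + 1 := (Nat.ceil_lt_add_one (by positivity)).le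
  have hN : 10 ^ 26 ≤ N := by
    have : (10 : ℝ) ^ 26 ≤ N := by linarith
    exact_mod_cast this
  have hNpos : 0 < N := by omega
  have hN0 : (0 : ℝ) < N := by exact_mod_cast hNpos
  have hc0 : c 0 = 0 := by simp [hcdef, char_zero_eq_zero hnonprincipal]
  have hD : ∑ n ∈ Finset.Icc 1 N, c n * (1 - (n : ℝ) / N) ≤ √q / 2 := by
    have h1 := (Complex.re_le_norm _).trans (abs_fejer_sum_le hprim hnonprincipal hquadratic hpar N)
    have h2 : (∑ n ∈ Finset.range N, χ n * ((N : ℂ) - n)).re =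
        N * ∑ n ∈ Finset.range N, c n * (1 - (n : ℝ) / N) := by
      rw [Complex.re_sum, Finset.mul_sum]
      refine Finset.sum_congr rfl fun n _ => ?_
      simp only [Complex.mul_re, hreal, Complex.sub_re, Complex.natCast_re, zero_mul, sub_zero,
        hcdef]
      field_simp
    rw [h2] at h1
    rw [← sum_range_eq_sum_Icc _ (by simp [hc0]) (by simp [div_self hN0.ne'])]
    refine le_of_mul_le_mul_left (h1.trans (le_of_eq (by ring))) hN0
  obtain ⟨him, hre⟩ := LFunction_one_bound hprim hnonprincipal hquadratic hreal hpar hNpos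
  have hmain := hc.sum_le hN h24 hD
  rw [← sum_range_eq_sum_Icc _ (by simp [hc0]) (by simp)] at hmain
  have hnum := log_cutoff (q := q) (by omega) h24 hN1 hN
  rw [Complex.le_def]
  refine ⟨?_, by rw [him, Complex.ofReal_im]⟩
  rw [Complex.ofReal_re]
  linarith
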